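/- arXiv:1110.4085 — 2 statements merged into one kernel-verified Lean document; each statement's English description precedes it below -/
import Mathlib

section
/- Let n ≥ 1 be an integer, Ω ⊂ ℝⁿ a bounded open set, T > 0, x₀ ∈ ℝⁿ \ cl(Ω), β ∈ (0,1) with sup_{x∈Ω}|x−x₀| < βT, and C₀ > 0 such that ψ ≥ 1 on Ω × (−T,T), where ψ(x,t) = |x−x₀|² − βt² + C₀; for λ ≥ 1 set φ = e^{λψ}. Let η ∈ (0,T) and ε ∈ (0,1) satisfy (1−ε)(T−η)β ≥ sup_{x∈Ω}|x−x₀|. Then there exist c* > 0 and s₀ > 0 such that for every s ≥ s₀ and every smooth z : ℝⁿ × ℝ → ℝ vanishing for x outside a compact subset of Ω, the weighted energy E_s(t) = (1/2) ∫_Ω e^{2sφ(x,t)} (|∂ₜz|² + |∇z|²) dx satisfies, for every t ∈ [T−η, T]: E_s(t) ≤ E_s(T−η) e^{−s c* (t−(T−η))} + (1/(2 s c*)) ∫_{T−η}^{T} ∫_Ω e^{2sφ} |∂ₜ²z − Δz|² dx dτ. -/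
open MeasureTheory Real Set
open scoped RealInnerProductSpace

/-- The Laplacian of a real-valued function on Euclidean space. -/
noncomputable def lap {n : ℕ} (f : EuclideanSpace ℝ (Fin n) → ℝ) (x : EuclideanSpace ℝ (Fin n)) : ℝ :=
  ∑ i : Fin n, fderiv ℝ (fun y => fderiv ℝ f y (EuclideanSpace.single i 1)) x (EuclideanSpace.single i 1)

/-- The weight `ψ(x,t) = |x - x₀|² - β t² + C₀`. -/
noncomputable def psi {n : ℕ} (x₀ : EuclideanSpace ℝ (Fin n)) (β C₀ : ℝ)
    (x : EuclideanSpace ℝ (Fin n)) (t : ℝ) : ℝ :=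
  ‖x - x₀‖ ^ 2 - β * t ^ 2 + C₀

/-- The Carleman weight `φ = e^{λψ}`. -/
noncomputable def phi {n : ℕ} (x₀ : EuclideanSpace ℝ (Fin n)) (β C₀ l : ℝ)
    (x : EuclideanSpace ℝ (Fin n)) (t : ℝ) : ℝ :=
  Real.exp (l * psi x₀ β C₀ x t)

/-!
Differentiating the weighted energy `E(t) = ½ ∫ w (|∂ₜz|² + |∇z|²)` and integrating by parts in
space gives `E' = ∫ ½ ∂ₜw (|∂ₜz|² + |∇z|²) - ∂ₜz ⟪∇w, ∇z⟫ + w ∂ₜz (∂ₜ²z - Δz)`. The cross term is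
at most `½ |∇w| (|∂ₜz|² + |∇z|²)`, so a weight with `∂ₜw + |∇w| ≤ -2kw` absorbs it and, after
Young's inequality on the source term, `E' ≤ -kE + (1/2k) ∫ w |∂ₜ²z - Δz|²`; Grönwall concludes. For
the Carleman weight, `∂ₜw + |∇w| = 4sλφ (|x - x₀| - βt) w`, and `|x - x₀| - βt ≤ -εβ(T - η)` as soon
as `t ≥ T - η`.
-/

open Function Topology
open scoped Gradient Laplacian

theorem norm_sub_le_sSup_image {E : Type*} [SeminormedAddCommGroup E] {Ω : Set E}
    (hΩ : Bornology.IsBounded Ω) (x₀ : E) {x : E} (hx : x ∈ Ω) :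
    ‖x - x₀‖ ≤ sSup ((fun x => ‖x - x₀‖) '' Ω) := by
  obtain ⟨R, hR⟩ := hΩ.subset_closedBall x₀
  exact le_csSup ⟨R, forall_mem_image.2 fun y hy => mem_closedBall_iff_norm.1 (hR hy)⟩
    (mem_image_of_mem _ hx)

theorem le_mul_exp_add_integral_of_deriv_le {E E' G : ℝ → ℝ} {k t₀ T : ℝ} (hk : 0 ≤ k)
    (hE : ContinuousOn E (Icc t₀ T)) (hE' : ∀ t ∈ Ioo t₀ T, HasDerivAt E (E' t) t)
    (hG : Continuous G) (hG₀ : ∀ t, 0 ≤ G t) (hle : ∀ t ∈ Ioo t₀ T, E' t ≤ -k * E t + G t)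
    {t : ℝ} (ht : t ∈ Icc t₀ T) :
    E t ≤ E t₀ * exp (-(k * (t - t₀))) + ∫ τ in t₀..t, G τ := by
  set I : ℝ → ℝ := fun t => ∫ τ in t₀..t, G τ
  have hI (t : ℝ) : HasDerivAt I (G t) t :=
    intervalIntegral.integral_hasDerivAt_right (hG.intervalIntegrable _ _)
      (hG.stronglyMeasurableAtFilter _ _) hG.continuousAt
  have hexp (t : ℝ) : HasDerivAt (fun t => exp (k * (t - t₀))) (exp (k * (t - t₀)) * k) t := by
    simpa using (((hasDerivAt_id t).sub_const t₀).const_mul k).exp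
  have hanti : AntitoneOn (fun t => exp (k * (t - t₀)) * (E t - I t)) (Icc t₀ T) := by
    refine antitoneOn_of_hasDerivWithinAt_nonpos (convex_Icc _ _)
      (f' := fun t => exp (k * (t - t₀)) * k * (E t - I t) + exp (k * (t - t₀)) * (E' t - G t))
      ?_ ?_ ?_
    · exact (by fun_prop : Continuous fun t => exp (k * (t - t₀))).continuousOn.mul
        (hE.sub fun t _ => (hI t).continuousAt.continuousWithinAt)
    · rw [interior_Icc]
      exact fun t ht => ((hexp t).mul ((hE' t ht).sub (hI t))).hasDerivWithinAt
    · rw [interior_Icc]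
      intro t ht
      have hkI : 0 ≤ k * I t :=
        mul_nonneg hk (intervalIntegral.integral_nonneg ht.1.le fun τ _ => hG₀ τ)
      calc exp (k * (t - t₀)) * k * (E t - I t) + exp (k * (t - t₀)) * (E' t - G t)
          = exp (k * (t - t₀)) * (E' t - (-k * E t + G t) - k * I t) := by ring
        _ ≤ 0 := mul_nonpos_of_nonneg_of_nonpos (exp_pos _).le (by linarith [hle t ht])
  have hmul : exp (k * (t - t₀)) * (E t - I t) ≤ E t₀ := by
    simpa [I] using hanti (left_mem_Icc.2 (ht.1.trans ht.2)) ht ht.1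
  have hdiv : E t - I t ≤ E t₀ * exp (-(k * (t - t₀))) := by
    rwa [exp_neg, ← div_eq_mul_inv, le_div_iff₀' (exp_pos _)]
  linarith

section ParametricIntegral

variable {X E : Type*} [TopologicalSpace X] [T2Space X] [MeasurableSpace X]
  [OpensMeasurableSpace X] {μ : Measure X} [IsFiniteMeasureOnCompacts μ] [NormedAddCommGroup E]
  {K : Set X} {g g' : X → ℝ → E}

theorem integrable_slice_of_compact_support (hK : IsCompact K) (hg : Continuous (uncurry g))
    (hgK : ∀ x ∉ K, ∀ t, g x t = 0) (t : ℝ) : Integrable (g · t) μ :=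
  (hg.uncurry_right t).integrable_of_hasCompactSupport
    (HasCompactSupport.intro hK fun x hx => hgK x hx t)

theorem hasDerivAt_integral_of_compact_support [NormedSpace ℝ E] (hK : IsCompact K)
    (hg : Continuous (uncurry g)) (hg' : Continuous (uncurry g'))
    (hderiv : ∀ x t, HasDerivAt (g x) (g' x t) t) (hgK : ∀ x ∉ K, ∀ t, g x t = 0) (t : ℝ) :
    HasDerivAt (fun t => ∫ x, g x t ∂μ) (∫ x, g' x t ∂μ) t := by
  have hg'K : ∀ x ∉ K, ∀ t, g' x t = 0 := fun x hx t => by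
    rw [← (hderiv x t).deriv, funext (hgK x hx), deriv_const]
  have hint := integrable_slice_of_compact_support (μ := μ) hK hg hgK
  obtain ⟨C, hC⟩ := (hK.prod (isCompact_closedBall t 1)).exists_bound_of_continuousOn
    hg'.continuousOn
  refine (hasDerivAt_integral_of_dominated_loc_of_deriv_le (F := fun t x => g x t)
    (F' := fun t x => g' x t) (bound := K.indicator fun _ => C)
    (Metric.closedBall_mem_nhds t one_pos) (.of_forall fun t => (hint t).1) (hint t)
    (integrable_slice_of_compact_support hK hg' hg'K t).1 (.of_forall fun x τ hτ => ?_) ?_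
    (.of_forall fun x τ _ => hderiv x τ)).2
  · by_cases hx : x ∈ K
    · simpa [hx] using hC (x, τ) ⟨hx, hτ⟩
    · simp [hx, hg'K x hx]
  · exact (integrable_indicator_iff hK.measurableSet).2 (integrableOn_const hK.measure_ne_top)

end ParametricIntegral

section Slices

theorem slice_eventuallyEq_zero {X F : Type*} [TopologicalSpace X] [Zero F] {z : X → ℝ → F}
    {K : Set X} (hK : IsClosed K) (hzK : ∀ x ∉ K, ∀ t, z x t = 0) {x : X} (hx : x ∉ K) (t : ℝ) :
    (z · t) =ᶠ[𝓝 x] fun _ => 0 := by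
  filter_upwards [hK.isOpen_compl.mem_nhds hx] with y hy using hzK y hy t

theorem deriv_slice_eq_zero_of_notMem {X F : Type*} [NormedAddCommGroup F] [NormedSpace ℝ F]
    {z : X → ℝ → F} {K : Set X} (hzK : ∀ x ∉ K, ∀ t, z x t = 0) {x : X} (hx : x ∉ K) (t : ℝ) :
    deriv (z x) t = 0 := by
  rw [funext (hzK x hx), deriv_const]

variable {V F : Type*} [NormedAddCommGroup V] [NormedSpace ℝ V] [NormedAddCommGroup F]
  [NormedSpace ℝ F] {z : V → ℝ → F} {m n : WithTop ℕ∞}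

theorem contDiff_uncurry_deriv (hz : ContDiff ℝ n (uncurry z)) (hmn : m + 1 ≤ n) :
    ContDiff ℝ m (uncurry fun x t => deriv (z x) t) :=
  ContDiff.fderiv_apply (f := fun q : V × ℝ => z q.1) (by fun_prop) contDiff_snd contDiff_const hmn

theorem contDiff_uncurry_fderiv (hz : ContDiff ℝ n (uncurry z)) (hmn : m + 1 ≤ n) :
    ContDiff ℝ m (uncurry fun x t => fderiv ℝ (z · t) x) :=
  ContDiff.fderiv (f := fun (q : V × ℝ) y => z y q.2) (by fun_prop) contDiff_fst hmn

theorem hasDerivAt_fderiv_slice (hz : ContDiff ℝ 2 (uncurry z)) (x : V) (t : ℝ) :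
    HasDerivAt (fun τ => fderiv ℝ (z · τ) x) (fderiv ℝ (fun y => deriv (z y) t) x) t := by
  set D := fderiv ℝ (uncurry z)
  have hz' (q : V × ℝ) : HasFDerivAt (uncurry z) (D q) q :=
    (hz.differentiable two_ne_zero q).hasFDerivAt
  have hD (q : V × ℝ) : HasFDerivAt D (fderiv ℝ D q) q :=
    ((hz.fderiv_right (m := 1) le_rfl).differentiable one_ne_zero q).hasFDerivAt
  have hline (y : V) (τ : ℝ) : HasDerivAt (fun τ : ℝ => (y, τ)) ((0 : V), (1 : ℝ)) τ :=
    (hasDerivAt_const τ y).prodMk (hasDerivAt_id τ)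
  have hspace : (fun τ => fderiv ℝ (z · τ) x) = fun τ => (D (x, τ)).comp (.inl ℝ V ℝ) :=
    funext fun τ => ((hz' (x, τ)).comp (f := (·, τ)) x (hasFDerivAt_prodMk_left x τ)).fderiv
  have htime : (fun y => deriv (z y) t) = fun y => D (y, t) (0, 1) :=
    funext fun y => ((hz' (y, t)).comp_hasDerivAt t (hline y t)).deriv
  have hmixed : fderiv ℝ (fun y => D (y, t) (0, 1)) x =
      (fderiv ℝ D (x, t) (0, 1)).comp (.inl ℝ V ℝ) := by
    ext v
    rw [(((hD (x, t)).comp x (hasFDerivAt_prodMk_left x t)).clm_apply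
      (hasFDerivAt_const ((0 : V), (1 : ℝ)) x)).fderiv]
    simpa using (hz.contDiffAt.isSymmSndFDerivAt (by simp)).eq (v, 0) (0, 1)
  rw [hspace, htime, hmixed]
  simpa using ((hD (x, t)).comp_hasDerivAt t (hline x t)).clm_comp
    (hasDerivAt_const t (ContinuousLinearMap.inl ℝ V ℝ))

end Slices

section InnerProductSpace

variable {V : Type*} [NormedAddCommGroup V] [InnerProductSpace ℝ V]

theorem half_mul_sub_inner_add_le {g v : V} {a f k p w : ℝ} (hk : 0 < k) (hw : 0 ≤ w)
    (hp : p + ‖g‖ ≤ -(2 * k * w)) :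
    1 / 2 * p * (a ^ 2 + ‖v‖ ^ 2) - a * ⟪g, v⟫ + w * a * f ≤
      -k * (1 / 2 * (w * (a ^ 2 + ‖v‖ ^ 2))) + 1 / (2 * k) * (w * f ^ 2) := by
  have hcross : -(a * ⟪g, v⟫) ≤ ‖g‖ * (1 / 2 * (a ^ 2 + ‖v‖ ^ 2)) :=
    calc -(a * ⟪g, v⟫) ≤ |a| * |⟪g, v⟫| := by rw [← abs_mul]; exact neg_le_abs _
      _ ≤ |a| * (‖g‖ * ‖v‖) := by gcongr; exact abs_real_inner_le_norm g v
      _ = ‖g‖ * (|a| * ‖v‖) := by ring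
      _ ≤ ‖g‖ * (1 / 2 * (a ^ 2 + ‖v‖ ^ 2)) := by
        refine mul_le_mul_of_nonneg_left ?_ (norm_nonneg g)
        linarith [two_mul_le_add_sq |a| ‖v‖, sq_abs a]
  have hyoung : a * f ≤ k / 2 * a ^ 2 + 1 / (2 * k) * f ^ 2 := by
    have hsq : 0 ≤ 1 / (2 * k) * (k * a - f) ^ 2 := by positivity
    have hexpand : 1 / (2 * k) * (k * a - f) ^ 2 =
        k / 2 * a ^ 2 + 1 / (2 * k) * f ^ 2 - a * f := by
      field_simp
      ring
    linarith
  have hweight : (p + ‖g‖) * (1 / 2 * (a ^ 2 + ‖v‖ ^ 2)) ≤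
      -(2 * k * w) * (1 / 2 * (a ^ 2 + ‖v‖ ^ 2)) := by gcongr
  have hsource : w * (a * f) ≤ w * (k / 2 * a ^ 2 + 1 / (2 * k) * f ^ 2) := by gcongr
  have hgrad : 0 ≤ k / 2 * (w * ‖v‖ ^ 2) := by positivity
  linarith

section Gradient

variable [CompleteSpace V] {z : V → ℝ → ℝ} {m n : WithTop ℕ∞}

theorem gradient_slice_eq_zero_of_notMem {K : Set V} {x : V} (hK : IsClosed K)
    (hzK : ∀ x ∉ K, ∀ t, z x t = 0) (hx : x ∉ K) (t : ℝ) : ∇ (z · t) x = 0 := by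
  rw [(slice_eventuallyEq_zero hK hzK hx t).gradient_eq, gradient_fun_const]

theorem contDiff_uncurry_gradient (hz : ContDiff ℝ n (uncurry z)) (hmn : m + 1 ≤ n) :
    ContDiff ℝ m (uncurry fun x t => ∇ (z · t) x) :=
  (InnerProductSpace.toDual ℝ V).symm.contDiff.comp (contDiff_uncurry_fderiv hz hmn)

theorem hasDerivAt_gradient_slice (hz : ContDiff ℝ 2 (uncurry z)) (x : V) (t : ℝ) :
    HasDerivAt (fun τ => ∇ (z · τ) x) (∇ (fun y => deriv (z y) t) x) t :=
  (InnerProductSpace.toDual ℝ V).symm.toContinuousLinearEquiv.hasFDerivAt.comp_hasDerivAt t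
    (hasDerivAt_fderiv_slice hz x t)

end Gradient

section Laplacian

variable [FiniteDimensional ℝ V]

theorem laplacian_eq_sum_fderiv_fderiv {ι : Type*} [Fintype ι] (b : OrthonormalBasis ι ℝ V)
    {f : V → ℝ} {x : V} (hf : ContDiffAt ℝ 2 f x) :
    Δ f x = ∑ i, fderiv ℝ (fun y => fderiv ℝ f y (b i)) x (b i) := by
  have hd : DifferentiableAt ℝ (fderiv ℝ f) x :=
    (hf.fderiv_right (m := 1) le_rfl).differentiableAt one_ne_zero
  rw [InnerProductSpace.laplacian_eq_iteratedFDeriv_orthonormalBasis f b]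
  refine Finset.sum_congr rfl fun i _ => ?_
  rw [iteratedFDeriv_two_apply, fderiv_clm_apply hd (by fun_prop)]
  simp

theorem lap_eq_laplacian {n : ℕ} {f : EuclideanSpace ℝ (Fin n) → ℝ} {x : EuclideanSpace ℝ (Fin n)}
    (hf : ContDiffAt ℝ 2 f x) : lap f x = Δ f x := by
  simp [laplacian_eq_sum_fderiv_fderiv (EuclideanSpace.basisFun (Fin n) ℝ) hf, lap]

theorem continuous_uncurry_laplacian {z : V → ℝ → ℝ} (hz : ContDiff ℝ 2 (uncurry z)) :
    Continuous (uncurry fun x t => Δ (z · t) x) := by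
  let b := stdOrthonormalBasis ℝ V
  have hsum : (uncurry fun x t => Δ (z · t) x) =
      fun q : V × ℝ => ∑ i, fderiv ℝ (fun y => fderiv ℝ (z · q.2) y (b i)) q.1 (b i) :=
    funext fun q => laplacian_eq_sum_fderiv_fderiv b
      (ContDiff.contDiffAt (by fun_prop : ContDiff ℝ 2 fun y => z y q.2))
  have hfst (i) : ContDiff ℝ 1 (uncurry fun x t => fderiv ℝ (z · t) x (b i)) :=
    (contDiff_uncurry_fderiv hz le_rfl).clm_apply contDiff_const
  rw [hsum]
  exact continuous_finsetSum _ fun i _ =>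
    ((contDiff_uncurry_fderiv (hfst i) (m := 0) le_rfl).clm_apply contDiff_const).continuous

/-- The wave operator `□z = ∂ₜ²z - Δz`. -/
noncomputable def dAlembertian (z : V → ℝ → ℝ) (x : V) (t : ℝ) : ℝ :=
  deriv (deriv (z x)) t - Δ (z · t) x

theorem continuous_uncurry_dAlembertian {z : V → ℝ → ℝ} (hz : ContDiff ℝ 2 (uncurry z)) :
    Continuous (uncurry (dAlembertian z)) :=
  have hzt := contDiff_uncurry_deriv (m := 1) hz le_rfl
  (contDiff_uncurry_deriv (m := 0) hzt le_rfl).continuous.sub (continuous_uncurry_laplacian hz)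

theorem dAlembertian_eq_zero_of_notMem {K : Set V} {x : V} (hK : IsClosed K) {z : V → ℝ → ℝ}
    (hzK : ∀ x ∉ K, ∀ t, z x t = 0) (hx : x ∉ K) (t : ℝ) : dAlembertian z x t = 0 := by
  have hlap : Δ (z · t) x = 0 := by
    rw [(InnerProductSpace.laplacian_congr_nhds (slice_eventuallyEq_zero hK hzK hx t)).eq_of_nhds,
      laplacian_eq_sum_fderiv_fderiv (stdOrthonormalBasis ℝ V) contDiffAt_const]
    simp
  rw [dAlembertian, hlap, sub_zero]
  exact deriv_slice_eq_zero_of_notMem (fun y hy t => deriv_slice_eq_zero_of_notMem hzK hy t) hx t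

variable [MeasurableSpace V] [BorelSpace V] (μ : Measure V) [μ.IsAddHaarMeasure]

theorem integral_mul_laplacian_add_inner_gradient_eq_zero {f g : V → ℝ} (hg : ContDiff ℝ 1 g)
    (hgc : HasCompactSupport g) (hf : ContDiff ℝ 2 f) :
    ∫ x, (g x * Δ f x + ⟪∇ g x, ∇ f x⟫) ∂μ = 0 := by
  let b := stdOrthonormalBasis ℝ V
  let f' (i) (x : V) : ℝ := fderiv ℝ f x (b i)
  let f'' (i) (x : V) : ℝ := fderiv ℝ (f' i) x (b i)
  let g' (i) (x : V) : ℝ := fderiv ℝ g x (b i)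
  have hf' (i) : ContDiff ℝ 1 (f' i) := (hf.fderiv_right le_rfl).clm_apply contDiff_const
  have hf'' (i) : Continuous (f'' i) :=
    ((hf' i).continuous_fderiv one_ne_zero).clm_apply continuous_const
  have hg' (i) : Continuous (g' i) :=
    (hg.continuous_fderiv one_ne_zero).clm_apply continuous_const
  have hint_left (i) : Integrable (fun x => g x * f'' i x) μ :=
    (hg.continuous.mul (hf'' i)).integrable_of_hasCompactSupport hgc.mul_right
  have hint_right (i) : Integrable (fun x => g' i x * f' i x) μ :=
    ((hg' i).mul (hf' i).continuous).integrable_of_hasCompactSupport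
      (hgc.fderiv_apply ℝ _).mul_right
  have hparts (i) : ∫ x, g x * f'' i x ∂μ = -∫ x, g' i x * f' i x ∂μ :=
    integral_mul_fderiv_eq_neg_fderiv_mul_of_integrable (hint_right i) (hint_left i)
      ((hg.continuous.mul (hf' i).continuous).integrable_of_hasCompactSupport hgc.mul_right)
      (fun x _ => hg.differentiable one_ne_zero x) (fun x _ => (hf' i).differentiable one_ne_zero x)
  have hcoord (x : V) : g x * Δ f x + ⟪∇ g x, ∇ f x⟫ = ∑ i, (g x * f'' i x + g' i x * f' i x) := by
    rw [laplacian_eq_sum_fderiv_fderiv b hf.contDiffAt, Finset.mul_sum,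
      ← b.sum_inner_mul_inner, ← Finset.sum_add_distrib]
    simp only [real_inner_comm (∇ f _) (b _), inner_gradient_left, f', f'', g']
  simp only [hcoord]
  rw [integral_finsetSum _ fun i _ => (hint_left i).fun_add (hint_right i)]
  refine Finset.sum_eq_zero fun i _ => ?_
  rw [integral_add (hint_left i) (hint_right i), hparts i, neg_add_cancel]

end Laplacian

section EnergyBalance

variable [FiniteDimensional ℝ V] {K : Set V} {w z : V → ℝ → ℝ} {x : V}

/-- The energy density `½ w (|∂ₜz|² + |∇z|²)` of `z` with weight `w`. -/
noncomputable def energyDensity (w z : V → ℝ → ℝ) (x : V) (t : ℝ) : ℝ :=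
  1 / 2 * (w x t * (deriv (z x) t ^ 2 + ‖∇ (z · t) x‖ ^ 2))

/-- The divergence of the weighted energy flux `w ∂ₜz ∇z`, expanded by the product rule. -/
noncomputable def energyFluxDiv (w z : V → ℝ → ℝ) (x : V) (t : ℝ) : ℝ :=
  w x t * deriv (z x) t * Δ (z · t) x +
    (w x t * ⟪∇ (z · t) x, ∇ (fun y => deriv (z y) t) x⟫ +
      deriv (z x) t * ⟪∇ (w · t) x, ∇ (z · t) x⟫)

/-- The rate at which the variation of the weight and the source `□z` produce energy: the part of
the time derivative of `energyDensity` that is not the divergence of a flux. -/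
noncomputable def energyProduction (w z : V → ℝ → ℝ) (x : V) (t : ℝ) : ℝ :=
  1 / 2 * deriv (w x) t * (deriv (z x) t ^ 2 + ‖∇ (z · t) x‖ ^ 2) -
    deriv (z x) t * ⟪∇ (w · t) x, ∇ (z · t) x⟫ + w x t * deriv (z x) t * dAlembertian z x t

theorem hasDerivAt_energyDensity (hw : ContDiff ℝ 1 (uncurry w)) (hz : ContDiff ℝ 2 (uncurry z))
    (x : V) (t : ℝ) :
    HasDerivAt (energyDensity w z x) (energyProduction w z x t + energyFluxDiv w z x t) t := by
  have hw' : HasDerivAt (w x) (deriv (w x) t) t :=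
    (ContDiff.differentiable (by fun_prop : ContDiff ℝ 1 (w x)) one_ne_zero t).hasDerivAt
  have hz' : HasDerivAt (deriv (z x)) (deriv (deriv (z x)) t) t :=
    (ContDiff.differentiable (n := 1) ((contDiff_uncurry_deriv hz le_rfl).comp
      (contDiff_prodMk_right x)) one_ne_zero t).hasDerivAt
  refine ((hw'.fun_mul ((hz'.fun_pow 2).fun_add
    (hasDerivAt_gradient_slice hz x t).norm_sq)).const_mul (1 / 2)).congr_deriv ?_
  simp only [energyProduction, energyFluxDiv, dAlembertian]
  push_cast
  ring

theorem continuous_uncurry_energyDensity (hw : Continuous (uncurry w))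
    (hz : ContDiff ℝ 1 (uncurry z)) : Continuous (uncurry (energyDensity w z)) := by
  have hzt := (contDiff_uncurry_deriv (m := 0) hz le_rfl).continuous
  have hzx := (contDiff_uncurry_gradient (m := 0) hz le_rfl).continuous
  exact continuous_const.mul (hw.mul ((hzt.pow 2).add (hzx.norm.pow 2)))

theorem continuous_uncurry_energyFluxDiv (hw : ContDiff ℝ 1 (uncurry w))
    (hz : ContDiff ℝ 2 (uncurry z)) : Continuous (uncurry (energyFluxDiv w z)) := by
  have hzt := contDiff_uncurry_deriv (m := 1) hz le_rfl
  have hzx := (contDiff_uncurry_gradient (m := 1) hz le_rfl).continuous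
  have hztx := (contDiff_uncurry_gradient (m := 0) hzt le_rfl).continuous
  have hwx := (contDiff_uncurry_gradient (m := 0) hw le_rfl).continuous
  exact ((hw.continuous.mul hzt.continuous).mul (continuous_uncurry_laplacian hz)).add
    ((hw.continuous.mul (hzx.inner hztx)).add (hzt.continuous.mul (hwx.inner hzx)))

theorem continuous_uncurry_energyProduction (hw : ContDiff ℝ 1 (uncurry w))
    (hz : ContDiff ℝ 2 (uncurry z)) : Continuous (uncurry (energyProduction w z)) := by
  have hzt := (contDiff_uncurry_deriv (m := 1) hz le_rfl).continuous
  have hzx := (contDiff_uncurry_gradient (m := 1) hz le_rfl).continuous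
  have hwt := (contDiff_uncurry_deriv (m := 0) hw le_rfl).continuous
  have hwx := (contDiff_uncurry_gradient (m := 0) hw le_rfl).continuous
  exact (((continuous_const.mul hwt).mul ((hzt.pow 2).add (hzx.norm.pow 2))).sub
    (hzt.mul (hwx.inner hzx))).add ((hw.continuous.mul hzt).mul
      (continuous_uncurry_dAlembertian hz))

theorem energyDensity_eq_zero_of_notMem (hK : IsClosed K) (hzK : ∀ x ∉ K, ∀ t, z x t = 0)
    (hx : x ∉ K) (t : ℝ) : energyDensity w z x t = 0 := by
  simp [energyDensity, deriv_slice_eq_zero_of_notMem hzK hx,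
    gradient_slice_eq_zero_of_notMem hK hzK hx]

theorem energyFluxDiv_eq_zero_of_notMem (hK : IsClosed K) (hzK : ∀ x ∉ K, ∀ t, z x t = 0)
    (hx : x ∉ K) (t : ℝ) : energyFluxDiv w z x t = 0 := by
  simp [energyFluxDiv, deriv_slice_eq_zero_of_notMem hzK hx,
    gradient_slice_eq_zero_of_notMem hK hzK hx]

theorem energyProduction_eq_zero_of_notMem (hK : IsClosed K) (hzK : ∀ x ∉ K, ∀ t, z x t = 0)
    (hx : x ∉ K) (t : ℝ) : energyProduction w z x t = 0 := by
  simp [energyProduction, deriv_slice_eq_zero_of_notMem hzK hx,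
    gradient_slice_eq_zero_of_notMem hK hzK hx]

theorem energyProduction_le {k t : ℝ} (hk : 0 < k) (hw : 0 ≤ w x t)
    (hdecay : deriv (w x) t + ‖∇ (w · t) x‖ ≤ -(2 * k * w x t)) :
    energyProduction w z x t ≤
      -k * energyDensity w z x t + 1 / (2 * k) * (w x t * dAlembertian z x t ^ 2) :=
  half_mul_sub_inner_add_le hk hw hdecay

end EnergyBalance

section WeightedEnergy

variable [MeasurableSpace V]

/-- The energy `½ ∫ w (|∂ₜz|² + |∇z|²) dμ` of `z` at time `t`, weighted by `w`. The energy in a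
region `Ω` is obtained by restricting `μ` to `Ω`. -/
noncomputable def weightedEnergy [FiniteDimensional ℝ V] (μ : Measure V) (w z : V → ℝ → ℝ)
    (t : ℝ) : ℝ :=
  ∫ x, energyDensity w z x t ∂μ

variable [FiniteDimensional ℝ V] [BorelSpace V] {μ : Measure V} {K : Set V} {w z : V → ℝ → ℝ}

theorem integral_energyFluxDiv_eq_zero [μ.IsAddHaarMeasure] (hK : IsCompact K)
    (hzK : ∀ x ∉ K, ∀ t, z x t = 0) (hw : ContDiff ℝ 1 (uncurry w))
    (hz : ContDiff ℝ 2 (uncurry z)) (t : ℝ) : ∫ x, energyFluxDiv w z x t ∂μ = 0 := by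
  have hwt : ContDiff ℝ 1 (w · t) := by fun_prop
  have hzt : ContDiff ℝ 1 fun x => deriv (z x) t :=
    (contDiff_uncurry_deriv hz le_rfl).comp (contDiff_prodMk_left t)
  have hz₂ : ContDiff ℝ 2 (z · t) := by fun_prop
  have hsupp : HasCompactSupport fun x => w x t * deriv (z x) t :=
    HasCompactSupport.intro hK fun x hx => by rw [deriv_slice_eq_zero_of_notMem hzK hx, mul_zero]
  rw [← integral_mul_laplacian_add_inner_gradient_eq_zero μ (hwt.mul hzt) hsupp hz₂]
  congr 1 with x
  rw [energyFluxDiv, inner_gradient_left (f := fun x => w x t * deriv (z x) t),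
    fderiv_fun_mul (hwt.differentiable one_ne_zero x) (hzt.differentiable one_ne_zero x),
    real_inner_comm, inner_gradient_left, inner_gradient_left]
  rfl

theorem hasDerivAt_weightedEnergy [μ.IsAddHaarMeasure] (hK : IsCompact K)
    (hzK : ∀ x ∉ K, ∀ t, z x t = 0) (hw : ContDiff ℝ 1 (uncurry w))
    (hz : ContDiff ℝ 2 (uncurry z)) (t : ℝ) :
    HasDerivAt (weightedEnergy μ w z) (∫ x, energyProduction w z x t ∂μ) t := by
  have he := continuous_uncurry_energyDensity hw.continuous (hz.of_le one_le_two)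
  have hp := continuous_uncurry_energyProduction hw hz
  have hf := continuous_uncurry_energyFluxDiv hw hz
  have hpf : Continuous (uncurry fun x t => energyProduction w z x t + energyFluxDiv w z x t) :=
    hp.add hf
  have hderiv := hasDerivAt_integral_of_compact_support (μ := μ) hK he hpf
    (hasDerivAt_energyDensity hw hz)
    (fun x hx => energyDensity_eq_zero_of_notMem hK.isClosed hzK hx) t
  rwa [integral_add
    (integrable_slice_of_compact_support hK hp
      (fun x hx => energyProduction_eq_zero_of_notMem hK.isClosed hzK hx) t)
    (integrable_slice_of_compact_support hK hf
      (fun x hx => energyFluxDiv_eq_zero_of_notMem hK.isClosed hzK hx) t),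
    integral_energyFluxDiv_eq_zero hK hzK hw hz, add_zero] at hderiv

theorem integral_energyProduction_le [IsFiniteMeasureOnCompacts μ] (hK : IsCompact K)
    (hzK : ∀ x ∉ K, ∀ t, z x t = 0) (hw : ContDiff ℝ 1 (uncurry w))
    (hw₀ : ∀ x t, 0 ≤ w x t) (hz : ContDiff ℝ 2 (uncurry z)) {k t : ℝ} (hk : 0 < k)
    (hdecay : ∀ x ∈ K, deriv (w x) t + ‖∇ (w · t) x‖ ≤ -(2 * k * w x t)) :
    ∫ x, energyProduction w z x t ∂μ ≤
      -k * weightedEnergy μ w z t + 1 / (2 * k) * ∫ x, w x t * dAlembertian z x t ^ 2 ∂μ := by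
  have hint_e : Integrable (energyDensity w z · t) μ := integrable_slice_of_compact_support hK
    (continuous_uncurry_energyDensity hw.continuous (hz.of_le one_le_two))
    (fun x hx => energyDensity_eq_zero_of_notMem hK.isClosed hzK hx) t
  have hint_p : Integrable (energyProduction w z · t) μ := integrable_slice_of_compact_support hK
    (continuous_uncurry_energyProduction hw hz)
    (fun x hx => energyProduction_eq_zero_of_notMem hK.isClosed hzK hx) t
  have hf : Continuous (uncurry fun x t => w x t * dAlembertian z x t ^ 2) :=
    hw.continuous.mul ((continuous_uncurry_dAlembertian hz).pow 2)
  have hint_f : Integrable (fun x => w x t * dAlembertian z x t ^ 2) μ :=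
    integrable_slice_of_compact_support hK hf
      (fun x hx t => by simp [dAlembertian_eq_zero_of_notMem hK.isClosed hzK hx]) t
  rw [weightedEnergy, ← integral_const_mul, ← integral_const_mul,
    ← integral_add (hint_e.const_mul _) (hint_f.const_mul _)]
  refine integral_mono hint_p ((hint_e.const_mul _).add (hint_f.const_mul _)) fun x => ?_
  by_cases hx : x ∈ K
  · exact energyProduction_le hk (hw₀ x t) (hdecay x hx)
  · simp [energyProduction_eq_zero_of_notMem hK.isClosed hzK hx,
      energyDensity_eq_zero_of_notMem hK.isClosed hzK hx,
      dAlembertian_eq_zero_of_notMem hK.isClosed hzK hx]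

theorem continuous_integral_weight_mul_dAlembertian_sq [IsFiniteMeasureOnCompacts μ]
    (hK : IsCompact K) (hzK : ∀ x ∉ K, ∀ t, z x t = 0) (hw : Continuous (uncurry w))
    (hz : ContDiff ℝ 2 (uncurry z)) :
    Continuous fun t => ∫ x, w x t * dAlembertian z x t ^ 2 ∂μ := by
  rw [← continuousOn_univ]
  refine continuousOn_integral_of_compact_support (f := fun t x => w x t * dAlembertian z x t ^ 2)
    hK ((hw.mul ((continuous_uncurry_dAlembertian hz).pow 2)).comp continuous_swap).continuousOn
    fun t x _ hx => ?_
  rw [dAlembertian_eq_zero_of_notMem hK.isClosed hzK hx, zero_pow two_ne_zero, mul_zero]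

theorem weightedEnergy_le_mul_exp_add [μ.IsAddHaarMeasure] (hK : IsCompact K)
    (hzK : ∀ x ∉ K, ∀ t, z x t = 0) (hw : ContDiff ℝ 1 (uncurry w)) (hw₀ : ∀ x t, 0 ≤ w x t)
    (hz : ContDiff ℝ 2 (uncurry z)) {k t₀ T : ℝ} (hk : 0 < k)
    (hdecay : ∀ x ∈ K, ∀ t ∈ Ioo t₀ T, deriv (w x) t + ‖∇ (w · t) x‖ ≤ -(2 * k * w x t))
    {t : ℝ} (ht : t ∈ Icc t₀ T) :
    weightedEnergy μ w z t ≤ weightedEnergy μ w z t₀ * exp (-(k * (t - t₀))) +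
      1 / (2 * k) * ∫ τ in Ioo t₀ T, ∫ x, w x τ * dAlembertian z x τ ^ 2 ∂μ := by
  have hE := hasDerivAt_weightedEnergy (μ := μ) hK hzK hw hz
  have hF₀ (τ : ℝ) : 0 ≤ ∫ x, w x τ * dAlembertian z x τ ^ 2 ∂μ :=
    integral_nonneg fun x => mul_nonneg (hw₀ x τ) (sq_nonneg _)
  have hF : Continuous fun τ => ∫ x, w x τ * dAlembertian z x τ ^ 2 ∂μ :=
    continuous_integral_weight_mul_dAlembertian_sq hK hzK hw.continuous hz
  have hmono : ∫ τ in t₀..t, ∫ x, w x τ * dAlembertian z x τ ^ 2 ∂μ ≤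
      ∫ τ in Ioo t₀ T, ∫ x, w x τ * dAlembertian z x τ ^ 2 ∂μ := by
    rw [← integral_Ioc_eq_integral_Ioo, ← intervalIntegral.integral_of_le (ht.1.trans ht.2)]
    exact intervalIntegral.integral_mono_interval le_rfl ht.1 ht.2 (.of_forall hF₀)
      (hF.intervalIntegrable _ _)
  calc weightedEnergy μ w z t
      ≤ weightedEnergy μ w z t₀ * exp (-(k * (t - t₀))) +
          ∫ τ in t₀..t, 1 / (2 * k) * ∫ x, w x τ * dAlembertian z x τ ^ 2 ∂μ :=
        le_mul_exp_add_integral_of_deriv_le hk.le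
          (fun τ _ => (hE τ).continuousAt.continuousWithinAt) (fun τ _ => hE τ)
          (hF.const_mul _) (fun τ => mul_nonneg (by positivity) (hF₀ τ))
          (fun τ hτ => integral_energyProduction_le hK hzK hw hw₀ hz hk
            fun x hx => hdecay x hx τ hτ) ht
    _ ≤ _ := by
        rw [intervalIntegral.integral_const_mul]
        gcongr

end WeightedEnergy

end InnerProductSpace

section CarlemanWeight

variable {V : Type*} [NormedAddCommGroup V] {x₀ x : V} {β C₀ l s t δ : ℝ}

/-- The phase `ψ(x, t) = |x - x₀|² - βt² + C₀`; on Euclidean space it is `psi`. -/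
noncomputable def carlemanPhase (x₀ : V) (β C₀ : ℝ) (x : V) (t : ℝ) : ℝ :=
  ‖x - x₀‖ ^ 2 - β * t ^ 2 + C₀

/-- The energy weight `e^{2sφ}` with `φ = e^{lψ}`, where `ψ` is `carlemanPhase x₀ β C₀`. -/
noncomputable def carlemanWeight (x₀ : V) (β C₀ l s : ℝ) (x : V) (t : ℝ) : ℝ :=
  exp (2 * s * exp (l * carlemanPhase x₀ β C₀ x t))

theorem hasDerivAt_carlemanWeight :
    HasDerivAt (carlemanWeight x₀ β C₀ l s x)
      (-(4 * s * l * exp (l * carlemanPhase x₀ β C₀ x t) * (β * t)) *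
        carlemanWeight x₀ β C₀ l s x t) t := by
  have hphase : HasDerivAt (carlemanPhase x₀ β C₀ x) (-(2 * β * t)) t := by
    refine ((((hasDerivAt_pow 2 t).const_mul β).const_sub (‖x - x₀‖ ^ 2)).add_const C₀).congr_deriv
      ?_
    push_cast
    ring
  refine ((hphase.const_mul l).exp.const_mul (2 * s)).exp.congr_deriv ?_
  rw [carlemanWeight]
  ring

variable [InnerProductSpace ℝ V]

theorem contDiff_uncurry_carlemanWeight {n : WithTop ℕ∞} :
    ContDiff ℝ n (uncurry (carlemanWeight x₀ β C₀ l s)) := by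
  have hphase : ContDiff ℝ n (uncurry (carlemanPhase x₀ β C₀)) :=
    (((contDiff_fst.sub contDiff_const).norm_sq ℝ).sub
      (contDiff_const.mul (contDiff_snd.pow 2))).add contDiff_const
  exact (contDiff_const.mul (contDiff_const.mul hphase).exp).exp

theorem hasGradientAt_carlemanWeight [CompleteSpace V] :
    HasGradientAt (carlemanWeight x₀ β C₀ l s · t)
      ((4 * s * l * exp (l * carlemanPhase x₀ β C₀ x t) * carlemanWeight x₀ β C₀ l s x t) •
        (x - x₀)) x := by
  have hphase : HasFDerivAt (carlemanPhase x₀ β C₀ · t) (2 • innerSL ℝ (x - x₀)) x := by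
    simpa [carlemanPhase] using
      (((hasFDerivAt_id x).sub_const x₀).norm_sq.sub_const (β * t ^ 2)).add_const C₀
  rw [hasGradientAt_iff_hasFDerivAt]
  refine ((hphase.const_mul l).exp.const_mul (2 * s)).exp.congr_fderiv ?_
  ext v
  simp only [map_sub, smul_apply, sub_apply, coe_innerSL_apply, nsmul_eq_mul, Nat.cast_ofNat,
    smul_eq_mul, carlemanWeight, map_smul, InnerProductSpace.toDual_apply_apply]
  ring

theorem deriv_add_norm_gradient_carlemanWeight_le [CompleteSpace V] (hs : 0 ≤ s) (hl : 1 ≤ l)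
    (hphase : 0 ≤ carlemanPhase x₀ β C₀ x t) (hδ : 0 ≤ δ) (hx : ‖x - x₀‖ + δ ≤ β * t) :
    deriv (carlemanWeight x₀ β C₀ l s x) t + ‖∇ (carlemanWeight x₀ β C₀ l s · t) x‖ ≤
      -(4 * s * δ * carlemanWeight x₀ β C₀ l s x t) := by
  set w := carlemanWeight x₀ β C₀ l s x t with hw
  set φ := exp (l * carlemanPhase x₀ β C₀ x t) with hφ
  have hw₀ : 0 ≤ w := (exp_pos _).le
  have hφ₁ : 1 ≤ φ := one_le_exp (mul_nonneg (zero_le_one.trans hl) hphase)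
  have hlφ : 1 ≤ l * φ := one_le_mul_of_one_le_of_one_le hl hφ₁
  rw [hasDerivAt_carlemanWeight.deriv, hasGradientAt_carlemanWeight.gradient, norm_smul,
    norm_of_nonneg (by positivity), ← hw, ← hφ]
  calc -(4 * s * l * φ * (β * t)) * w + 4 * s * l * φ * w * ‖x - x₀‖
      = -(4 * s * w * (l * φ * (β * t - ‖x - x₀‖))) := by ring
    _ ≤ -(4 * s * w * (1 * δ)) := by gcongr; linarith
    _ = -(4 * s * δ * w) := by ring

theorem energy_decay_near_final_time_general [FiniteDimensional ℝ V] [MeasurableSpace V]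
    [BorelSpace V] (μ : Measure V) [μ.IsAddHaarMeasure] {Ω K : Set V} {T η ε : ℝ} (hβ : 0 < β)
    (hl : 1 ≤ l) (hη : η < T) (hε : 0 < ε)
    (hphase : ∀ x ∈ Ω, ∀ t ∈ Ioo (T - η) T, 0 ≤ carlemanPhase x₀ β C₀ x t)
    (hΩ : ∀ x ∈ Ω, ‖x - x₀‖ ≤ (1 - ε) * (T - η) * β) (hs : 0 < s) {z : V → ℝ → ℝ}
    (hz : ContDiff ℝ 2 (uncurry z)) (hK : IsCompact K) (hKΩ : K ⊆ Ω)
    (hzK : ∀ x ∉ K, ∀ t, z x t = 0) (ht : t ∈ Icc (T - η) T) :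
    weightedEnergy (μ.restrict Ω) (carlemanWeight x₀ β C₀ l s) z t ≤
      weightedEnergy (μ.restrict Ω) (carlemanWeight x₀ β C₀ l s) z (T - η) *
          exp (-(s * (2 * ε * β * (T - η)) * (t - (T - η)))) +
        1 / (2 * (s * (2 * ε * β * (T - η)))) * ∫ τ in Ioo (T - η) T,
          ∫ x in Ω, carlemanWeight x₀ β C₀ l s x τ * dAlembertian z x τ ^ 2 ∂μ := by
  have hTη : 0 < T - η := sub_pos.2 hη
  have hδ : 0 < ε * β * (T - η) := by positivity
  have henergy (τ : ℝ) : weightedEnergy (μ.restrict Ω) (carlemanWeight x₀ β C₀ l s) z τ =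
      weightedEnergy μ (carlemanWeight x₀ β C₀ l s) z τ :=
    setIntegral_eq_integral_of_forall_compl_eq_zero fun x hx =>
      energyDensity_eq_zero_of_notMem hK.isClosed hzK (fun hxK => hx (hKΩ hxK)) τ
  have hsource (τ : ℝ) : ∫ x in Ω, carlemanWeight x₀ β C₀ l s x τ * dAlembertian z x τ ^ 2 ∂μ =
      ∫ x, carlemanWeight x₀ β C₀ l s x τ * dAlembertian z x τ ^ 2 ∂μ :=
    setIntegral_eq_integral_of_forall_compl_eq_zero fun x hx => by
      simp [dAlembertian_eq_zero_of_notMem hK.isClosed hzK fun hxK => hx (hKΩ hxK)]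
  simp only [henergy, hsource]
  refine weightedEnergy_le_mul_exp_add hK hzK contDiff_uncurry_carlemanWeight
    (fun x τ => (exp_pos _).le) hz (by positivity) (fun x hx τ hτ => ?_) ht
  have hgap : ‖x - x₀‖ + ε * β * (T - η) ≤ β * τ :=
    calc ‖x - x₀‖ + ε * β * (T - η) ≤ β * (T - η) := by linarith [hΩ x (hKΩ hx)]
      _ ≤ β * τ := by gcongr; exact hτ.1.le
  convert deriv_add_norm_gradient_carlemanWeight_le hs.le hl (hphase x (hKΩ hx) τ hτ) hδ.le hgap
    using 2
  ring

end CarlemanWeight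

/-- **Exponential decay of the weighted energy near the final time** (estimate (2.26)):
there exist `c* > 0` and `s₀ > 0` such that for all `s ≥ s₀` and all smooth `z` vanishing (in
space) outside a compact subset of `Ω`, for every `t ∈ [T-η, T]`,
`E_s(t) ≤ E_s(T-η) e^{-sc*(t-(T-η))} + (1/(2sc*)) ∫_{T-η}^T ∫_Ω e^{2sφ}|∂ₜ²z - Δz|²`. -/
theorem energy_decay_near_final_time
    (n : ℕ) (hn : 1 ≤ n)
    (Ω : Set (EuclideanSpace ℝ (Fin n))) (hΩo : IsOpen Ω) (hΩb : Bornology.IsBounded Ω)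
    (T : ℝ) (hT : 0 < T)
    (x₀ : EuclideanSpace ℝ (Fin n)) (hx₀ : x₀ ∉ closure Ω)
    (β : ℝ) (hβ : β ∈ Set.Ioo (0:ℝ) 1)
    (htime : sSup ((fun x => ‖x - x₀‖) '' Ω) < β * T)
    (C₀ : ℝ) (hC₀ : 0 < C₀)
    (hψ : ∀ x ∈ Ω, ∀ t ∈ Set.Ioo (-T) T, 1 ≤ psi x₀ β C₀ x t)
    (l : ℝ) (hl : 1 ≤ l)
    (η : ℝ) (hη : η ∈ Set.Ioo (0:ℝ) T) (ε : ℝ) (hε : ε ∈ Set.Ioo (0:ℝ) 1)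
    (hsup : sSup ((fun x => ‖x - x₀‖) '' Ω) ≤ (1 - ε) * (T - η) * β) :
    ∃ c > (0:ℝ), ∃ s₀ > (0:ℝ), ∀ s ≥ s₀,
      ∀ z : EuclideanSpace ℝ (Fin n) → ℝ → ℝ,
        ContDiff ℝ (⊤ : ℕ∞) (fun q : EuclideanSpace ℝ (Fin n) × ℝ => z q.1 q.2) →
        (∃ K : Set (EuclideanSpace ℝ (Fin n)), IsCompact K ∧ K ⊆ Ω ∧
          ∀ x ∉ K, ∀ t : ℝ, z x t = 0) →
        ∀ t ∈ Set.Icc (T - η) T,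
          (1 / 2 : ℝ) * (∫ x in Ω, Real.exp (2 * s * phi x₀ β C₀ l x t) *
              ((deriv (z x) t) ^ 2 + ‖gradient (fun y => z y t) x‖ ^ 2))
            ≤ ((1 / 2 : ℝ) * ∫ x in Ω, Real.exp (2 * s * phi x₀ β C₀ l x (T - η)) *
                  ((deriv (z x) (T - η)) ^ 2 + ‖gradient (fun y => z y (T - η)) x‖ ^ 2)) *
                Real.exp (-(s * c * (t - (T - η))))
              + (1 / (2 * s * c)) * ∫ τ in Set.Ioo (T - η) T, ∫ x in Ω,
                  Real.exp (2 * s * phi x₀ β C₀ l x τ) *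
                    (deriv (deriv (z x)) τ - lap (fun y => z y τ) x) ^ 2 := by
  have hTη : 0 < T - η := sub_pos.2 hη.2
  have hdist (x) (hx : x ∈ Ω) : ‖x - x₀‖ ≤ (1 - ε) * (T - η) * β :=
    (norm_sub_le_sSup_image hΩb x₀ hx).trans hsup
  have hphase (x) (hx : x ∈ Ω) (t) (ht : t ∈ Ioo (T - η) T) : 0 ≤ carlemanPhase x₀ β C₀ x t :=
    zero_le_one.trans (hψ x hx t ⟨by linarith [ht.1], ht.2⟩)
  refine ⟨2 * ε * β * (T - η), mul_pos (mul_pos (mul_pos two_pos hε.1) hβ.1) hTη, 1, one_pos, ?_⟩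
  rintro s hs z hz ⟨K, hK, hKΩ, hzK⟩ t ht
  have hz₂ : ContDiff ℝ 2 (uncurry z) := contDiff_infty.1 hz 2
  have hlap (x) (τ : ℝ) : lap (z · τ) x = Δ (z · τ) x :=
    lap_eq_laplacian (ContDiff.contDiffAt (by fun_prop : ContDiff ℝ 2 (z · τ)))
  simp only [hlap, mul_assoc 2 s (2 * ε * β * (T - η)), ← integral_const_mul (1 / 2 : ℝ)]
  exact energy_decay_near_final_time_general volume hβ.1 hl hη.2 hε.1 hphase hdist
    (one_pos.trans_le hs) hz₂ hK hKΩ hzK ht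
end

section
/- Let n ≥ 1 be an integer, Ω ⊂ ℝⁿ a bounded open set, T > 0, x₀ ∈ ℝⁿ \ cl(Ω), and β ∈ (0,1) with sup_{x∈Ω}|x−x₀| < βT. Let C₀ > 0 be such that ψ ≥ 1 on Ω × (−T,T), where ψ(x,t) = |x−x₀|² − βt² + C₀. Then there exist λ > 0, s₀ > 0 and M > 0 such that, with φ = e^{λψ}, for every s ≥ s₀ and every smooth function z : ℝⁿ × ℝ → ℝ vanishing for x outside a compact subset of Ω (with no condition at t = ±T): s ∫_{−T}^{T} ∫_Ω e^{2sφ} (|∂ₜz|² + |∇z|²) dx dt + s³ ∫_{−T}^{T} ∫_Ω e^{2sφ} |z|² dx dt ≤ M ∫_{−T}^{T} ∫_Ω e^{2sφ} |∂ₜ²z − Δz|² dx dt. -/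
open MeasureTheory Real Set
open scoped RealInnerProductSpace

/-!
The proof is the multiplier method. With `v = e^{sφ}z`, the conjugated operator `e^{sφ} □ e^{-sφ}`
is `P - sQ` up to the error `sρv`, where `P = □v + s²⟨∇φ, ∇φ⟩v` and `Q = 2⟨∇φ, ∇v⟩ + (□φ - ρ)v`.
The product `PQ` is the divergence of a vector field minus two quadratic terms, one in `∇v`
and one of order `s²` in `v`. Both are coercive for `φ = e^{lψ}` with `l` large, since `x₀` stays
away from `Ω`: the free function `ρ = -2(1 + β)lφ` shares the convexity of `|x - x₀|²` between
`∂ₜv` and the spatial gradient, and the degenerate direction `∂ₜψ² = |∇ψ|²` is controlled by the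
terms that carry an additional `l`. For large `s` the remaining terms are absorbed.

No cut-off in time is needed: `|x - x₀| < βT` on `Ω` makes `∇φ` timelike at `t = ±T`, pointing
inwards, so that the flux of the vector field through both ends of the cylinder has the favourable
sign.
-/

section DirectionalDerivative

variable {X : Type*} [NormedAddCommGroup X] [NormedSpace ℝ X]

/-- The derivative `∂_w f` of `f` in the direction `w`, as a function on `X`. It is defined through
`fderiv` (and not `lineDeriv`), which agrees with it for the differentiable functions used here. -/
noncomputable def dirDeriv (w : X) (f : X → ℝ) (q : X) : ℝ :=
  fderiv ℝ f q w

lemma contDiff_dirDeriv {m k : WithTop ℕ∞} {f : X → ℝ} (hf : ContDiff ℝ k f) (hmk : m + 1 ≤ k)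
    (w : X) : ContDiff ℝ m (dirDeriv w f) :=
  (hf.fderiv_right hmk).clm_apply contDiff_const

lemma differentiable_dirDeriv {f : X → ℝ} (hf : ContDiff ℝ 2 f) (w : X) :
    Differentiable ℝ (dirDeriv w f) :=
  (contDiff_dirDeriv (m := 1) hf (by norm_num) w).differentiable one_ne_zero

lemma dirDeriv_comm {f : X → ℝ} (hf : ContDiff ℝ 2 f) (u w q : X) :
    dirDeriv u (dirDeriv w f) q = dirDeriv w (dirDeriv u f) q := by
  have hdf : DifferentiableAt ℝ (fderiv ℝ f) q :=
    (hf.fderiv_right (m := 1) (by norm_num)).differentiable one_ne_zero q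
  have hsnd (a b : X) : dirDeriv a (dirDeriv b f) q = fderiv ℝ (fderiv ℝ f) q a b := by
    unfold dirDeriv
    simp [fderiv_clm_apply hdf (differentiableAt_const b)]
  rw [hsnd, hsnd]
  exact hf.contDiffAt.isSymmSndFDerivAt (by simp) u w

section Rules

variable {f g : X → ℝ} {q : X}

lemma dirDeriv_add (hf : DifferentiableAt ℝ f q) (hg : DifferentiableAt ℝ g q) (w : X) :
    dirDeriv w (fun p => f p + g p) q = dirDeriv w f q + dirDeriv w g q := by
  simp [dirDeriv, fderiv_fun_add hf hg]

lemma dirDeriv_sub (hf : DifferentiableAt ℝ f q) (hg : DifferentiableAt ℝ g q) (w : X) :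
    dirDeriv w (fun p => f p - g p) q = dirDeriv w f q - dirDeriv w g q := by
  simp [dirDeriv, fderiv_fun_sub hf hg]

lemma dirDeriv_const_mul (hf : DifferentiableAt ℝ f q) (c : ℝ) (w : X) :
    dirDeriv w (fun p => c * f p) q = c * dirDeriv w f q := by
  simp [dirDeriv, fderiv_const_mul hf]

lemma dirDeriv_mul (hf : DifferentiableAt ℝ f q) (hg : DifferentiableAt ℝ g q) (w : X) :
    dirDeriv w (fun p => f p * g p) q = f q * dirDeriv w g q + g q * dirDeriv w f q := by
  simp [dirDeriv, fderiv_fun_mul hf hg]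

lemma dirDeriv_exp_const_mul (hf : DifferentiableAt ℝ f q) (c : ℝ) (w : X) :
    dirDeriv w (fun p => exp (c * f p)) q = c * exp (c * f q) * dirDeriv w f q := by
  simp only [dirDeriv, fderiv_exp (hf.const_mul c), fderiv_const_mul hf, smul_apply, smul_eq_mul]
  ring

lemma dirDeriv_sum {ι : Type*} {u : Finset ι} {F : ι → X → ℝ}
    (hF : ∀ i ∈ u, DifferentiableAt ℝ (F i) q) (w : X) :
    dirDeriv w (fun p => ∑ i ∈ u, F i p) q = ∑ i ∈ u, dirDeriv w (F i) q := by
  simp [dirDeriv, fderiv_fun_sum hF]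

end Rules

lemma dirDeriv_dirDeriv_exp_const_mul {f : X → ℝ} (hf : ContDiff ℝ 2 f) (c : ℝ) (u w q : X) :
    dirDeriv u (dirDeriv w fun p => exp (c * f p)) q =
      c * exp (c * f q) *
        (dirDeriv u (dirDeriv w f) q + c * (dirDeriv u f q * dirDeriv w f q)) := by
  have hdf := hf.differentiable two_ne_zero
  have hfirst : (dirDeriv w fun p => exp (c * f p)) =
      fun p => c * (exp (c * f p) * dirDeriv w f p) :=
    funext fun p => by rw [dirDeriv_exp_const_mul (hdf p), mul_assoc]
  have hexp := ((hdf q).const_mul c).exp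
  rw [hfirst, dirDeriv_const_mul (hexp.fun_mul (differentiable_dirDeriv hf w q)),
    dirDeriv_mul hexp (differentiable_dirDeriv hf w q), dirDeriv_exp_const_mul (hdf q)]
  ring

lemma eqOn_dirDeriv_zero {U : Set X} (hU : IsOpen U) {f : X → ℝ} (hf : EqOn f 0 U) (w : X) :
    EqOn (dirDeriv w f) 0 U := fun q hq => by
  have hfq : f =ᶠ[nhds q] fun _ => 0 := hf.eventuallyEq_of_mem (hU.mem_nhds hq)
  simp [dirDeriv, hfq.fderiv_eq]

end DirectionalDerivative

section FrameCalculus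

variable {X : Type*} [NormedAddCommGroup X] [NormedSpace ℝ X] {ι : Type*} [Fintype ι]
  (e : ι → X) (ε : ι → ℝ)

/-- The bilinear form `⟨∇f, ∇g⟩ = ∑ b, ε b ∂_b f ∂_b g` on gradients attached to the directions
`e b` with coefficients `ε b`. For the wave operator it is the Lorentzian product
`∂ₜf ∂ₜg - ∇f · ∇g`. -/
noncomputable def gradForm (f g : X → ℝ) (q : X) : ℝ :=
  ∑ b, ε b * (dirDeriv (e b) f q * dirDeriv (e b) g q)

/-- The Euclidean square `∑ b, (∂_b f)²` of the gradient along the frame `e`. -/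
noncomputable def gradNormSq (f : X → ℝ) (q : X) : ℝ :=
  ∑ b, dirDeriv (e b) f q ^ 2

/-- The Hessian `D²φ(∇f, ∇g)`, where the indices of the gradients are raised with `ε`. -/
noncomputable def hessForm (φ f g : X → ℝ) (q : X) : ℝ :=
  ∑ a, ∑ b, ε a * ε b *
    (dirDeriv (e a) (dirDeriv (e b) φ) q * (dirDeriv (e a) f q * dirDeriv (e b) g q))

/-- The second order operator `□f = ∑ b, ε b ∂_b² f`, which is `∂ₜ² - Δ` for the space-time
frame. -/
noncomputable def waveOp (f : X → ℝ) (q : X) : ℝ :=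
  ∑ b, ε b * dirDeriv (e b) (dirDeriv (e b) f) q

/-- The divergence `∑ a, ε a ∂_a F_a` adapted to `ε`: the divergence of the gradient is `□`. -/
noncomputable def frameDiv (F : ι → X → ℝ) (q : X) : ℝ :=
  ∑ a, ε a * dirDeriv (e a) (F a) q

variable {e ε} {f g φ ψ : X → ℝ} {q : X}

lemma gradNormSq_nonneg (f : X → ℝ) (q : X) : 0 ≤ gradNormSq e f q :=
  Finset.sum_nonneg fun _ _ => sq_nonneg _

lemma sq_dirDeriv_le_gradNormSq (f : X → ℝ) (q : X) (a : ι) :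
    dirDeriv (e a) f q ^ 2 ≤ gradNormSq e f q :=
  Finset.single_le_sum (f := fun b => dirDeriv (e b) f q ^ 2) (fun _ _ => sq_nonneg _)
    (Finset.mem_univ a)

lemma continuous_gradNormSq (hf : ContDiff ℝ 1 f) : Continuous (gradNormSq e f) :=
  continuous_finsetSum _ fun b _ =>
    (contDiff_dirDeriv (m := 0) hf (by norm_num) (e b)).continuous.pow 2

lemma gradForm_comm (f g : X → ℝ) (q : X) : gradForm e ε f g q = gradForm e ε g f q := by
  simp only [gradForm, mul_comm (dirDeriv _ f q)]

lemma sq_gradForm_le (hε : ∀ b, ε b ^ 2 = 1) (f g : X → ℝ) (q : X) :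
    gradForm e ε f g q ^ 2 ≤ gradNormSq e f q * gradNormSq e g q := by
  have hcs := Finset.sum_mul_sq_le_sq_mul_sq Finset.univ
    (fun b => ε b * dirDeriv (e b) f q) (fun b => dirDeriv (e b) g q)
  simpa only [gradForm, gradNormSq, mul_pow, hε, one_mul, mul_assoc] using hcs

lemma gradForm_add_left (hf : DifferentiableAt ℝ f q) (hg : DifferentiableAt ℝ g q) (h : X → ℝ) :
    gradForm e ε (fun p => f p + g p) h q = gradForm e ε f h q + gradForm e ε g h q := by
  simp only [gradForm, dirDeriv_add hf hg, add_mul, mul_add, Finset.sum_add_distrib]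

lemma gradForm_sub_left (hf : DifferentiableAt ℝ f q) (hg : DifferentiableAt ℝ g q) (h : X → ℝ) :
    gradForm e ε (fun p => f p - g p) h q = gradForm e ε f h q - gradForm e ε g h q := by
  simp only [gradForm, dirDeriv_sub hf hg, sub_mul, mul_sub, Finset.sum_sub_distrib]

lemma gradForm_const_mul_left (hf : DifferentiableAt ℝ f q) (c : ℝ) (h : X → ℝ) :
    gradForm e ε (fun p => c * f p) h q = c * gradForm e ε f h q := by
  simp only [gradForm, dirDeriv_const_mul hf, Finset.mul_sum]
  exact Finset.sum_congr rfl fun b _ => by ring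

lemma gradForm_mul_left (hf : DifferentiableAt ℝ f q) (hg : DifferentiableAt ℝ g q) (h : X → ℝ) :
    gradForm e ε (fun p => f p * g p) h q =
      f q * gradForm e ε g h q + g q * gradForm e ε f h q := by
  simp only [gradForm, dirDeriv_mul hf hg, Finset.mul_sum, ← Finset.sum_add_distrib]
  exact Finset.sum_congr rfl fun b _ => by ring

lemma gradForm_exp_const_mul_left (hf : DifferentiableAt ℝ f q) (c : ℝ) (h : X → ℝ) :
    gradForm e ε (fun p => exp (c * f p)) h q = c * exp (c * f q) * gradForm e ε f h q := by
  simp only [gradForm, dirDeriv_exp_const_mul hf, Finset.mul_sum]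
  exact Finset.sum_congr rfl fun b _ => by ring

lemma contDiff_gradForm {m k : WithTop ℕ∞} (hf : ContDiff ℝ k f) (hg : ContDiff ℝ k g)
    (hmk : m + 1 ≤ k) : ContDiff ℝ m (gradForm e ε f g) :=
  ContDiff.sum fun b _ => contDiff_const.mul
    ((contDiff_dirDeriv hf hmk (e b)).mul (contDiff_dirDeriv hg hmk (e b)))

lemma contDiff_waveOp {m k : WithTop ℕ∞} (hf : ContDiff ℝ k f) (hmk : m + 1 + 1 ≤ k) :
    ContDiff ℝ m (waveOp e ε f) :=
  ContDiff.sum fun b _ => contDiff_const.mul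
    (contDiff_dirDeriv (contDiff_dirDeriv hf hmk (e b)) le_rfl (e b))

lemma hessForm_comm (hφ : ContDiff ℝ 2 φ) (f g : X → ℝ) (q : X) :
    hessForm e ε φ f g q = hessForm e ε φ g f q := by
  unfold hessForm
  rw [Finset.sum_comm]
  refine Finset.sum_congr rfl fun b _ => Finset.sum_congr rfl fun a _ => ?_
  rw [dirDeriv_comm hφ (e a) (e b)]
  ring

lemma gradForm_gradForm_left (hf : ContDiff ℝ 2 f) (hg : ContDiff ℝ 2 g) (h : X → ℝ) (q : X) :
    gradForm e ε (gradForm e ε f g) h q = hessForm e ε f h g q + hessForm e ε g h f q := by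
  have hdf (b : ι) := differentiable_dirDeriv hf (e b) q
  have hdg (b : ι) := differentiable_dirDeriv hg (e b) q
  have hderiv (w : X) : dirDeriv w (gradForm e ε f g) q =
      ∑ b, ε b * (dirDeriv (e b) f q * dirDeriv w (dirDeriv (e b) g) q +
        dirDeriv (e b) g q * dirDeriv w (dirDeriv (e b) f) q) := by
    unfold gradForm
    rw [dirDeriv_sum fun b _ => ((hdf b).fun_mul (hdg b)).const_mul (ε b)]
    refine Finset.sum_congr rfl fun b _ => ?_
    rw [dirDeriv_const_mul ((hdf b).fun_mul (hdg b)), dirDeriv_mul (hdf b) (hdg b)]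
  rw [gradForm]
  simp only [hessForm, hderiv, Finset.sum_mul, Finset.mul_sum, ← Finset.sum_add_distrib]
  exact Finset.sum_congr rfl fun a _ => Finset.sum_congr rfl fun b _ => by ring

lemma frameDiv_mul_grad (hf : DifferentiableAt ℝ f q) (hg : ContDiff ℝ 2 g) :
    frameDiv e ε (fun a p => f p * dirDeriv (e a) g p) q =
      gradForm e ε f g q + f q * waveOp e ε g q := by
  simp only [frameDiv, gradForm, waveOp, Finset.mul_sum, ← Finset.sum_add_distrib]
  refine Finset.sum_congr rfl fun a _ => ?_
  rw [dirDeriv_mul hf (differentiable_dirDeriv hg (e a) q)]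
  ring

lemma frameDiv_add {F G : ι → X → ℝ} (hF : ∀ a, DifferentiableAt ℝ (F a) q)
    (hG : ∀ a, DifferentiableAt ℝ (G a) q) :
    frameDiv e ε (fun a p => F a p + G a p) q = frameDiv e ε F q + frameDiv e ε G q := by
  simp only [frameDiv, dirDeriv_add (hF _) (hG _), mul_add, Finset.sum_add_distrib]

lemma continuous_frameDiv {F : ι → X → ℝ} (hF : ∀ a, ContDiff ℝ 1 (F a)) :
    Continuous (frameDiv e ε F) :=
  continuous_finsetSum _ fun a _ => continuous_const.mul
    (contDiff_dirDeriv (m := 0) (hF a) (by norm_num) (e a)).continuous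

lemma waveOp_mul (hf : ContDiff ℝ 2 f) (hg : ContDiff ℝ 2 g) (q : X) :
    waveOp e ε (fun p => f p * g p) q =
      f q * waveOp e ε g q + 2 * gradForm e ε f g q + g q * waveOp e ε f q := by
  have hdf := hf.differentiable two_ne_zero
  have hdg := hg.differentiable two_ne_zero
  simp only [waveOp, gradForm, Finset.mul_sum, ← Finset.sum_add_distrib]
  refine Finset.sum_congr rfl fun b _ => ?_
  have hfirst : dirDeriv (e b) (fun p => f p * g p) =
      fun p => f p * dirDeriv (e b) g p + g p * dirDeriv (e b) f p :=
    funext fun p => dirDeriv_mul (hdf p) (hdg p) (e b)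
  have hdf' := differentiable_dirDeriv hf (e b)
  have hdg' := differentiable_dirDeriv hg (e b)
  rw [hfirst, dirDeriv_add ((hdf q).fun_mul (hdg' q)) ((hdg q).fun_mul (hdf' q)),
    dirDeriv_mul (hdf q) (hdg' q), dirDeriv_mul (hdg q) (hdf' q)]
  ring

lemma waveOp_exp_const_mul (hf : ContDiff ℝ 2 f) (c : ℝ) (q : X) :
    waveOp e ε (fun p => exp (c * f p)) q =
      c * exp (c * f q) * (waveOp e ε f q + c * gradForm e ε f f q) := by
  simp only [waveOp, gradForm, dirDeriv_dirDeriv_exp_const_mul hf, Finset.mul_sum,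
    ← Finset.sum_add_distrib]
  exact Finset.sum_congr rfl fun b _ => by ring

lemma hessForm_exp_const_mul (hψ : ContDiff ℝ 2 ψ) (c : ℝ) (f g : X → ℝ) (q : X) :
    hessForm e ε (fun p => exp (c * ψ p)) f g q =
      c * exp (c * ψ q) *
        (hessForm e ε ψ f g q + c * (gradForm e ε ψ f q * gradForm e ε ψ g q)) := by
  simp only [hessForm, gradForm, dirDeriv_dirDeriv_exp_const_mul hψ]
  rw [Finset.sum_mul_sum]
  simp only [Finset.mul_sum, ← Finset.sum_add_distrib]
  exact Finset.sum_congr rfl fun a _ => Finset.sum_congr rfl fun b _ => by ring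

end FrameCalculus

section PointwiseEstimate

variable {X : Type*} [NormedAddCommGroup X] [NormedSpace ℝ X] {ι : Type*} [Fintype ι]
  (e : ι → X) (ε : ι → ℝ) (φ ρ : X → ℝ)

/-- The conjugate `v = e^{sφ} z` of `z` by the weight. -/
noncomputable def conjugate (s : ℝ) (z : X → ℝ) (q : X) : ℝ :=
  exp (s * φ q) * z q

/-- The zeroth order coefficient `σ = □φ - ρ` of the multiplier `2⟨∇φ, ∇v⟩ + σv`. The function `ρ`
is free: it distributes the positivity between the gradient and the zeroth order terms. -/
noncomputable def multiplier (q : X) : ℝ :=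
  waveOp e ε φ q - ρ q

/-- The vector field whose divergence is the product of `□v + s²⟨∇φ, ∇φ⟩v` with the multiplier
`2⟨∇φ, ∇v⟩ + σv`, up to terms that are quadratic in `v` and `∇v`. -/
noncomputable def carlemanFlux (s : ℝ) (v : X → ℝ) (a : ι) (q : X) : ℝ :=
  (2 * gradForm e ε φ v q + multiplier e ε φ ρ q * v q) * dirDeriv (e a) v q +
    (s ^ 2 * (gradForm e ε φ φ q * v q ^ 2) - gradForm e ε v v q) * dirDeriv (e a) φ q

/-- Strong pseudoconvexity of the weight `φ` at `q`, with constant `c` and auxiliary function `ρ`: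
coercivity of the two quadratic terms produced by the multiplier method. -/
structure PseudoconvexAt (c : ℝ) (q : X) : Prop where
  gradient_coercive : ∀ f : X → ℝ, c * gradNormSq e f q ≤
    2 * hessForm e ε φ f f q - ρ q * gradForm e ε f f q
  weight_coercive : c ≤ 2 * hessForm e ε φ φ φ q + ρ q * gradForm e ε φ φ q

/-- The flux of the multiplier method at the point `q` of a boundary with outer normal `θ e_a`
(where `θ = ±1`) is negative, with constant `c`, in its terms of highest order in `s`. -/
structure OutflowAt (c : ℝ) (a : ι) (θ : ℝ) (q : X) : Prop where
  gradient_le : ∀ f : X → ℝ,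
    θ * (2 * gradForm e ε φ f q * dirDeriv (e a) f q - gradForm e ε f f q * dirDeriv (e a) φ q) ≤
      -c * gradNormSq e f q
  weight_le : θ * (gradForm e ε φ φ q * dirDeriv (e a) φ q) ≤ -c

/-- The size `|∇φ|² + |∇σ|² + σ² + ρ²` of the coefficients of the error terms. -/
noncomputable def coeffSize (q : X) : ℝ :=
  gradNormSq e φ q + gradNormSq e (multiplier e ε φ ρ) q + multiplier e ε φ ρ q ^ 2 + ρ q ^ 2

variable {e ε φ ρ} {c s N : ℝ} {v z : X → ℝ} {q : X}

lemma contDiff_conjugate {k : WithTop ℕ∞} (hφ : ContDiff ℝ k φ) (hz : ContDiff ℝ k z) :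
    ContDiff ℝ k (conjugate φ s z) :=
  (contDiff_const.mul hφ).exp.mul hz

lemma contDiff_multiplier (hφ : ContDiff ℝ 3 φ) (hρ : ContDiff ℝ 1 ρ) :
    ContDiff ℝ 1 (multiplier e ε φ ρ) :=
  (contDiff_waveOp hφ (by norm_num)).sub hρ

lemma contDiff_carlemanFlux (hφ : ContDiff ℝ 3 φ) (hρ : ContDiff ℝ 1 ρ) (hv : ContDiff ℝ 2 v)
    (a : ι) : ContDiff ℝ 1 (carlemanFlux e ε φ ρ s v a) := by
  have hφ₂ : ContDiff ℝ 2 φ := hφ.of_le (by norm_num)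
  have hle : (1 : WithTop ℕ∞) + 1 ≤ 2 := by norm_num
  refine ContDiff.add (ContDiff.mul (ContDiff.add ?_ ?_) ?_) (ContDiff.mul (ContDiff.sub ?_ ?_) ?_)
  · exact contDiff_const.mul (contDiff_gradForm hφ₂ hv hle)
  · exact (contDiff_multiplier hφ hρ).mul (hv.of_le one_le_two)
  · exact contDiff_dirDeriv hv hle _
  · exact contDiff_const.mul
      ((contDiff_gradForm hφ₂ hφ₂ hle).mul ((hv.of_le one_le_two).pow 2))
  · exact contDiff_gradForm hv hv hle
  · exact contDiff_dirDeriv hφ₂ hle _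

lemma continuous_coeffSize (hφ : ContDiff ℝ 3 φ) (hρ : ContDiff ℝ 1 ρ) :
    Continuous (coeffSize e ε φ ρ) :=
  (((continuous_gradNormSq (hφ.of_le (by norm_num))).add
    (continuous_gradNormSq (contDiff_multiplier hφ hρ))).add
    ((contDiff_multiplier hφ hρ).continuous.pow 2)).add (hρ.continuous.pow 2)

lemma gradNormSq_le_coeffSize : gradNormSq e φ q ≤ coeffSize e ε φ ρ q := by
  have := gradNormSq_nonneg (e := e) (multiplier e ε φ ρ) q
  unfold coeffSize
  linarith [this, sq_nonneg (multiplier e ε φ ρ q), sq_nonneg (ρ q)]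

lemma gradNormSq_multiplier_le_coeffSize :
    gradNormSq e (multiplier e ε φ ρ) q ≤ coeffSize e ε φ ρ q := by
  have := gradNormSq_nonneg (e := e) φ q
  unfold coeffSize
  linarith [this, sq_nonneg (multiplier e ε φ ρ q), sq_nonneg (ρ q)]

lemma sq_multiplier_le_coeffSize : multiplier e ε φ ρ q ^ 2 ≤ coeffSize e ε φ ρ q := by
  have h₁ := gradNormSq_nonneg (e := e) φ q
  have h₂ := gradNormSq_nonneg (e := e) (multiplier e ε φ ρ) q
  unfold coeffSize
  linarith [h₁, h₂, sq_nonneg (ρ q)]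

lemma sq_le_coeffSize : ρ q ^ 2 ≤ coeffSize e ε φ ρ q := by
  have h₁ := gradNormSq_nonneg (e := e) φ q
  have h₂ := gradNormSq_nonneg (e := e) (multiplier e ε φ ρ) q
  unfold coeffSize
  linarith [h₁, h₂, sq_nonneg (multiplier e ε φ ρ q)]

lemma dirDeriv_conjugate (hφ : DifferentiableAt ℝ φ q) (hz : DifferentiableAt ℝ z q) (s : ℝ)
    (w : X) : dirDeriv w (conjugate φ s z) q =
      exp (s * φ q) * dirDeriv w z q + s * dirDeriv w φ q * conjugate φ s z q := by
  unfold conjugate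
  rw [dirDeriv_mul (hφ.const_mul s).exp hz, dirDeriv_exp_const_mul hφ]
  ring

lemma exp_mul_waveOp (hφ : ContDiff ℝ 2 φ) (hz : ContDiff ℝ 2 z) (s : ℝ) (q : X) :
    exp (s * φ q) * waveOp e ε z q =
      waveOp e ε (conjugate φ s z) q - 2 * s * gradForm e ε φ (conjugate φ s z) q +
        (s ^ 2 * gradForm e ε φ φ q - s * waveOp e ε φ q) * conjugate φ s z q := by
  have hdφ := hφ.differentiable two_ne_zero q
  have hdz := hz.differentiable two_ne_zero q
  have hexp : ContDiff ℝ 2 fun p => exp (s * φ p) := (contDiff_const.mul hφ).exp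
  have hwave := waveOp_mul (e := e) (ε := ε) hexp hz q
  have hgrad := gradForm_mul_left (e := e) (ε := ε) (hdφ.const_mul s).exp hdz φ
  rw [waveOp_exp_const_mul hφ, gradForm_exp_const_mul_left hdφ] at hwave
  rw [gradForm_exp_const_mul_left hdφ] at hgrad
  unfold conjugate
  rw [gradForm_comm φ, hwave, hgrad, gradForm_comm z φ]
  ring

lemma gradForm_multiplier_left {σ : X → ℝ} (hφ : ContDiff ℝ 2 φ) (hσ : DifferentiableAt ℝ σ q)
    (hv : ContDiff ℝ 2 v) :
    gradForm e ε (fun p => 2 * gradForm e ε φ v p + σ p * v p) v q =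
      2 * (hessForm e ε φ v v q + hessForm e ε v φ v q) +
        (σ q * gradForm e ε v v q + v q * gradForm e ε σ v q) := by
  have hdv := hv.differentiable two_ne_zero q
  have hdφv := (contDiff_gradForm (e := e) (ε := ε) (m := 1) hφ hv
    (by norm_num)).differentiable one_ne_zero q
  rw [gradForm_add_left (hdφv.const_mul 2) (hσ.fun_mul hdv), gradForm_const_mul_left hdφv,
    gradForm_gradForm_left hφ hv, gradForm_mul_left hσ hdv, hessForm_comm hv φ]

lemma gradForm_lagrangian_left (hφ : ContDiff ℝ 2 φ) (hv : ContDiff ℝ 2 v) (s : ℝ) (q : X) :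
    gradForm e ε (fun p => s ^ 2 * (gradForm e ε φ φ p * v p ^ 2) - gradForm e ε v v p) φ q =
      s ^ 2 * (gradForm e ε φ φ q * (2 * v q * gradForm e ε φ v q) +
          v q ^ 2 * (2 * hessForm e ε φ φ φ q)) - 2 * hessForm e ε v φ v q := by
  have hle : (1 : WithTop ℕ∞) + 1 ≤ 2 := by norm_num
  have hdv := hv.differentiable two_ne_zero q
  have hdφφ := (contDiff_gradForm (e := e) (ε := ε) hφ hφ hle).differentiable one_ne_zero q
  have hdvv := (contDiff_gradForm (e := e) (ε := ε) hv hv hle).differentiable one_ne_zero q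
  have hdprod := hdφφ.fun_mul (hdv.fun_mul hdv)
  simp only [pow_two (v _)]
  rw [gradForm_sub_left (hdprod.const_mul _) hdvv, gradForm_const_mul_left hdprod,
    gradForm_mul_left hdφφ (hdv.fun_mul hdv), gradForm_mul_left hdv hdv,
    gradForm_gradForm_left hφ hφ, gradForm_gradForm_left hv hv, gradForm_comm v φ]
  ring

-- The third order products telescope: `⟨∇⟨∇φ, ∇v⟩, ∇v⟩` and `⟨∇⟨∇v, ∇v⟩, ∇φ⟩ / 2` have the term
-- `D²v(∇φ, ∇v)` in common.
lemma frameDiv_carlemanFlux (hφ : ContDiff ℝ 3 φ) (hρ : ContDiff ℝ 1 ρ) (hv : ContDiff ℝ 2 v)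
    (s : ℝ) (q : X) :
    frameDiv e ε (carlemanFlux e ε φ ρ s v) q =
      (waveOp e ε v q + s ^ 2 * gradForm e ε φ φ q * v q) *
        (2 * gradForm e ε φ v q + multiplier e ε φ ρ q * v q) +
      (2 * hessForm e ε φ v v q - ρ q * gradForm e ε v v q) +
      s ^ 2 * v q ^ 2 * (2 * hessForm e ε φ φ φ q + ρ q * gradForm e ε φ φ q) +
      v q * gradForm e ε (multiplier e ε φ ρ) v q := by
  have hφ₂ : ContDiff ℝ 2 φ := hφ.of_le (by norm_num)
  have hle : (1 : WithTop ℕ∞) + 1 ≤ 2 := by norm_num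
  have hdv := hv.differentiable two_ne_zero q
  have hdσ := (contDiff_multiplier (e := e) (ε := ε) hφ hρ).differentiable one_ne_zero q
  have hdφv := (contDiff_gradForm (e := e) (ε := ε) hφ₂ hv hle).differentiable one_ne_zero q
  have hdφφ := (contDiff_gradForm (e := e) (ε := ε) hφ₂ hφ₂ hle).differentiable one_ne_zero q
  have hdvv := (contDiff_gradForm (e := e) (ε := ε) hv hv hle).differentiable one_ne_zero q
  have hdα := (hdφv.const_mul 2).fun_add (hdσ.fun_mul hdv)
  have hdγ := ((hdφφ.fun_mul (hdv.fun_pow 2)).const_mul (s ^ 2)).fun_sub hdvv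
  unfold carlemanFlux
  rw [frameDiv_add (fun a => hdα.fun_mul (differentiable_dirDeriv hv (e a) q))
      (fun a => hdγ.fun_mul (differentiable_dirDeriv hφ₂ (e a) q)),
    frameDiv_mul_grad hdα hv, frameDiv_mul_grad hdγ hφ₂, gradForm_multiplier_left hφ₂ hdσ hv,
    gradForm_lagrangian_left hφ₂ hv]
  unfold multiplier
  ring

-- With `P = □v + s²⟨∇φ, ∇φ⟩v` and `Q = 2⟨∇φ, ∇v⟩ + σv` one has `e^{sφ}□z = P - sQ - sρv`, so that
-- `(e^{sφ}□z)²/2 + sPQ + s²ρ²v²/2 = ((P - sρv)² + (sQ + sρv)²)/2`.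
lemma neg_le_frameDiv_carlemanFlux (hφ : ContDiff ℝ 3 φ) (hρ : ContDiff ℝ 1 ρ)
    (hz : ContDiff ℝ 2 z) (hc : PseudoconvexAt e ε φ ρ c q) (hs : 0 ≤ s) :
    s * (c * gradNormSq e (conjugate φ s z) q) + s ^ 3 * (c * conjugate φ s z q ^ 2) +
        s * (conjugate φ s z q * gradForm e ε (multiplier e ε φ ρ) (conjugate φ s z) q) -
        s ^ 2 * (ρ q ^ 2 * conjugate φ s z q ^ 2) / 2 ≤
      s * frameDiv e ε (carlemanFlux e ε φ ρ s (conjugate φ s z)) q +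
        (exp (s * φ q) * waveOp e ε z q) ^ 2 / 2 := by
  have hv := contDiff_conjugate (s := s) (hφ.of_le (by norm_num : (2 : WithTop ℕ∞) ≤ 3)) hz
  rw [frameDiv_carlemanFlux hφ hρ hv, exp_mul_waveOp (hφ.of_le (by norm_num)) hz]
  have hgrad := hc.gradient_coercive (conjugate φ s z)
  have hweight := hc.weight_coercive
  set v := conjugate φ s z
  set P := waveOp e ε v q + s ^ 2 * gradForm e ε φ φ q * v q with hP
  set Q := 2 * gradForm e ε φ v q + multiplier e ε φ ρ q * v q with hQ
  have hoperator : waveOp e ε v q - 2 * s * gradForm e ε φ v q +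
      (s ^ 2 * gradForm e ε φ φ q - s * waveOp e ε φ q) * v q = P - s * Q - s * ρ q * v q := by
    rw [hP, hQ, multiplier]
    ring
  rw [hoperator]
  have h₁ := mul_le_mul_of_nonneg_left hgrad hs
  have h₂ := mul_le_mul_of_nonneg_left hweight (by positivity : 0 ≤ s ^ 3 * v q ^ 2)
  nlinarith only [h₁, h₂, sq_nonneg (P - s * ρ q * v q), sq_nonneg (s * Q + s * ρ q * v q)]

lemma pointwise_conjugate_estimate (hε : ∀ b, ε b ^ 2 = 1) (hφ : ContDiff ℝ 3 φ)
    (hρ : ContDiff ℝ 1 ρ) (hz : ContDiff ℝ 2 z) (hc₀ : 0 < c)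
    (hc : PseudoconvexAt e ε φ ρ c q) (hs : 1 ≤ s) (hN : coeffSize e ε φ ρ q ≤ N)
    (hNs : N * (1 + c) ≤ c ^ 2 * s) :
    c / 2 * (s * gradNormSq e (conjugate φ s z) q + s ^ 3 * conjugate φ s z q ^ 2) ≤
      s * frameDiv e ε (carlemanFlux e ε φ ρ s (conjugate φ s z)) q +
        (exp (s * φ q) * waveOp e ε z q) ^ 2 / 2 := by
  have hs₀ : 0 ≤ s := zero_le_one.trans hs
  refine le_trans ?_ (neg_le_frameDiv_carlemanFlux hφ hρ hz hc hs₀)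
  set v := conjugate φ s z
  set G := gradNormSq e v q
  set S := gradForm e ε (multiplier e ε φ ρ) v q
  have hρN : ρ q ^ 2 ≤ N := sq_le_coeffSize.trans hN
  have hG₀ : 0 ≤ G := gradNormSq_nonneg v q
  have hN₀ : 0 ≤ N := (sq_nonneg _).trans hρN
  have hSN : S ^ 2 ≤ N * G :=
    (sq_gradForm_le hε _ v q).trans (mul_le_mul_of_nonneg_right
      (gradNormSq_multiplier_le_coeffSize.trans hN) hG₀)
  have hcross : -(c ^ 2 * G + N * v q ^ 2) ≤ 2 * c * (v q * S) := by
    have hsq : (2 * c * (v q * S)) ^ 2 ≤ (c ^ 2 * G + N * v q ^ 2) ^ 2 := by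
      nlinarith only [mul_le_mul_of_nonneg_left hSN (by positivity : 0 ≤ 4 * c ^ 2 * v q ^ 2),
        sq_nonneg (c ^ 2 * G - N * v q ^ 2)]
    exact (abs_le.1 (abs_le_of_sq_le_sq hsq (by positivity))).1
  have habsorb : N * (1 + c * s) ≤ c ^ 2 * s ^ 2 := by
    nlinarith only [mul_le_mul_of_nonneg_right hNs hs₀, mul_nonneg hN₀ (sub_nonneg.2 hs)]
  refine le_of_mul_le_mul_left ?_ (by positivity : 0 < 2 * c)
  nlinarith only [mul_le_mul_of_nonneg_left hcross hs₀,
    mul_le_mul_of_nonneg_left habsorb (by positivity : 0 ≤ s * v q ^ 2),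
    mul_le_mul_of_nonneg_left hρN (by positivity : 0 ≤ c * s ^ 2 * v q ^ 2)]

lemma weighted_le_conjugate (hφ : DifferentiableAt ℝ φ q) (hz : DifferentiableAt ℝ z q)
    (hs : 0 ≤ s) (hN : gradNormSq e φ q ≤ N) :
    s * (exp (2 * s * φ q) * gradNormSq e z q) + s ^ 3 * (exp (2 * s * φ q) * z q ^ 2) ≤
      2 * (N + 1) * (s * gradNormSq e (conjugate φ s z) q + s ^ 3 * conjugate φ s z q ^ 2) := by
  have hexp : exp (2 * s * φ q) = exp (s * φ q) ^ 2 := by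
    rw [← exp_nat_mul]
    ring_nf
  set v := conjugate φ s z with hv
  have hgrad : exp (2 * s * φ q) * gradNormSq e z q ≤
      2 * gradNormSq e v q + 2 * s ^ 2 * v q ^ 2 * gradNormSq e φ q := by
    simp only [gradNormSq, Finset.mul_sum, ← Finset.sum_add_distrib]
    refine Finset.sum_le_sum fun b _ => ?_
    have hb : exp (s * φ q) * dirDeriv (e b) z q =
        dirDeriv (e b) v q - s * dirDeriv (e b) φ q * v q := by
      rw [hv, dirDeriv_conjugate hφ hz]
      ring
    rw [hexp, ← mul_pow, hb]
    nlinarith only [sq_nonneg (dirDeriv (e b) v q + s * dirDeriv (e b) φ q * v q)]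
  have hzero : exp (2 * s * φ q) * z q ^ 2 = v q ^ 2 := by
    rw [hexp, ← mul_pow, hv, conjugate]
  have hN₀ : 0 ≤ N := (gradNormSq_nonneg φ q).trans hN
  have hG₀ : 0 ≤ gradNormSq e v q := gradNormSq_nonneg v q
  rw [hzero]
  nlinarith only [mul_le_mul_of_nonneg_left hgrad hs,
    mul_le_mul_of_nonneg_left hN (by positivity : 0 ≤ 2 * s ^ 3 * v q ^ 2),
    mul_nonneg hN₀ (mul_nonneg hs hG₀), (by positivity : 0 ≤ s ^ 3 * v q ^ 2)]

lemma pointwise_carleman_estimate (hε : ∀ b, ε b ^ 2 = 1) (hφ : ContDiff ℝ 3 φ)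
    (hρ : ContDiff ℝ 1 ρ) (hz : ContDiff ℝ 2 z) (hc₀ : 0 < c)
    (hc : PseudoconvexAt e ε φ ρ c q) (hs : 1 ≤ s) (hN : coeffSize e ε φ ρ q ≤ N)
    (hNs : N * (1 + c) ≤ c ^ 2 * s) :
    s * (exp (2 * s * φ q) * gradNormSq e z q) + s ^ 3 * (exp (2 * s * φ q) * z q ^ 2) ≤
      2 * (N + 1) / c * (2 * s * frameDiv e ε (carlemanFlux e ε φ ρ s (conjugate φ s z)) q +
        exp (2 * s * φ q) * waveOp e ε z q ^ 2) := by
  have hgradN : gradNormSq e φ q ≤ N := gradNormSq_le_coeffSize.trans hN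
  have hN₀ : 0 ≤ N := (gradNormSq_nonneg φ q).trans hgradN
  have hexp : exp (2 * s * φ q) * waveOp e ε z q ^ 2 = (exp (s * φ q) * waveOp e ε z q) ^ 2 := by
    rw [mul_pow, ← exp_nat_mul]
    ring_nf
  have hconj := pointwise_conjugate_estimate hε hφ hρ hz hc₀ hc hs hN hNs
  have hback := weighted_le_conjugate (hφ.differentiable (by norm_num) q)
    (hz.differentiable two_ne_zero q) (zero_le_one.trans hs) hgradN
  set J := s * gradNormSq e (conjugate φ s z) q + s ^ 3 * conjugate φ s z q ^ 2
  calc _ ≤ 2 * (N + 1) * J := hback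
    _ = 2 * (N + 1) / c * (2 * (c / 2 * J)) := by field_simp
    _ ≤ _ := by
      rw [hexp]
      gcongr
      linarith

lemma carlemanFlux_eq_zero {a : ι} (hv : v q = 0) (hdv : ∀ b, dirDeriv (e b) v q = 0) :
    carlemanFlux e ε φ ρ s v a q = 0 := by
  simp [carlemanFlux, gradForm, hv, hdv]

lemma mul_carlemanFlux_nonpos {a : ι} {θ : ℝ} (hθ : θ ^ 2 = 1) (hc : OutflowAt e ε φ c a θ q)
    (hσ : multiplier e ε φ ρ q ^ 2 ≤ (c * s) ^ 2) (hc₀ : 0 ≤ c) (v : X → ℝ) :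
    θ * carlemanFlux e ε φ ρ s v a q ≤ 0 := by
  have hgrad := hc.gradient_le v
  have hweight := mul_le_mul_of_nonneg_left hc.weight_le (by positivity : 0 ≤ s ^ 2 * v q ^ 2)
  have hnormal := sq_dirDeriv_le_gradNormSq (e := e) v q a
  set D := dirDeriv (e a) v q
  have hcross : θ * (multiplier e ε φ ρ q * v q * D) ≤ c * (s ^ 2 * v q ^ 2 + D ^ 2) / 2 := by
    refine (le_abs_self _).trans (abs_le_of_sq_le_sq ?_ (by positivity))
    calc (θ * (multiplier e ε φ ρ q * v q * D)) ^ 2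
        = multiplier e ε φ ρ q ^ 2 * (v q * D) ^ 2 := by rw [mul_pow, hθ]; ring
      _ ≤ (c * s) ^ 2 * (v q * D) ^ 2 := by gcongr
      _ ≤ (c * (s ^ 2 * v q ^ 2 + D ^ 2) / 2) ^ 2 := by
        nlinarith only [sq_nonneg (c * (s ^ 2 * v q ^ 2 - D ^ 2))]
  unfold carlemanFlux
  nlinarith only [hgrad, hweight, hcross, mul_le_mul_of_nonneg_left hnormal hc₀,
    (by positivity : 0 ≤ c * (s ^ 2 * v q ^ 2)), mul_nonneg hc₀ (gradNormSq_nonneg (e := e) v q)]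

end PointwiseEstimate

section Slab

variable {E : Type*} [TopologicalSpace E] [T2Space E] [MeasurableSpace E] [BorelSpace E]
  {μ : Measure E} [IsFiniteMeasureOnCompacts μ] {K : Set E} {a b : ℝ} {G : E × ℝ → ℝ}

lemma integrableOn_slab (hK : IsCompact K) (hG : Continuous G) :
    IntegrableOn G (K ×ˢ Ioo a b) (μ.prod volume) :=
  (hG.continuousOn.integrableOn_compact (hK.prod isCompact_Icc)).mono_set
    (prod_mono_right Ioo_subset_Icc_self)

variable [SFinite μ]

lemma setIntegral_slab_symm (hK : IsCompact K) (hG : Continuous G) :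
    ∫ q in K ×ˢ Ioo a b, G q ∂μ.prod volume = ∫ t in Ioo a b, ∫ x in K, G (x, t) ∂μ := by
  rw [← Measure.prod_restrict]
  refine integral_prod_symm G ?_
  rw [Measure.prod_restrict]
  exact integrableOn_slab hK hG

lemma integral_integral_eq_setIntegral_slab {Ω : Set E} (hK : IsCompact K) (hKΩ : K ⊆ Ω)
    (hG : Continuous G) (h₀ : EqOn G 0 (Kᶜ ×ˢ univ)) :
    ∫ t in Ioo a b, ∫ x in Ω, G (x, t) ∂μ = ∫ q in K ×ˢ Ioo a b, G q ∂μ.prod volume := by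
  rw [setIntegral_slab_symm hK hG]
  congr with t
  have hzero (x : E) (hx : x ∉ K) : G (x, t) = 0 := h₀ ⟨hx, mem_univ t⟩
  rw [setIntegral_eq_integral_of_forall_compl_eq_zero hzero,
    setIntegral_eq_integral_of_forall_compl_eq_zero fun x hx => hzero x fun hxK => hx (hKΩ hxK)]

end Slab

section SpaceTime

variable {E : Type*} [NormedAddCommGroup E] [NormedSpace ℝ E]

lemma hasDerivAt_slice_time {G : E × ℝ → ℝ} (hG : Differentiable ℝ G) (x : E) (t : ℝ) :
    HasDerivAt (fun τ => G (x, τ)) (dirDeriv (0, 1) G (x, t)) t :=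
  (hG (x, t)).hasFDerivAt.comp_hasDerivAt t ((hasDerivAt_const t x).prodMk (hasDerivAt_id t))

lemma fderiv_slice_space {G : E × ℝ → ℝ} (hG : Differentiable ℝ G) (w x : E) (t : ℝ) :
    fderiv ℝ (fun y => G (y, t)) x w = dirDeriv (w, 0) G (x, t) := by
  have hslice : HasFDerivAt (fun y => G (y, t))
      (fderiv ℝ G (x, t) ∘L ContinuousLinearMap.inl ℝ E ℝ) x :=
    (hG (x, t)).hasFDerivAt.comp x (hasFDerivAt_prodMk_left x t)
  rw [hslice.fderiv]
  simp [dirDeriv]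

lemma eqOn_dirDeriv_zero_off {K : Set E} (hK : IsClosed K) {G : E × ℝ → ℝ}
    (hG : EqOn G 0 (Kᶜ ×ˢ univ)) (w : E × ℝ) : EqOn (dirDeriv w G) 0 (Kᶜ ×ˢ univ) :=
  eqOn_dirDeriv_zero (hK.isOpen_compl.prod isOpen_univ) hG w

variable [MeasurableSpace E] [BorelSpace E] [FiniteDimensional ℝ E] {μ : Measure E}
  [μ.IsAddHaarMeasure] {K : Set E} {a b : ℝ} {G : E × ℝ → ℝ}

lemma integral_fderiv_eq_zero {g : E → ℝ} (hg : ContDiff ℝ 1 g) (hc : HasCompactSupport g)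
    (w : E) : ∫ x, fderiv ℝ g x w ∂μ = 0 := by
  have hcont : Continuous fun x => fderiv ℝ g x w :=
    (hg.continuous_fderiv one_ne_zero).clm_apply continuous_const
  have hparts := integral_mul_fderiv_eq_neg_fderiv_mul_of_integrable (μ := μ)
    (f := fun _ => (1 : ℝ)) (g := g) (v := w) (by simp)
    (by simpa using hcont.integrable_of_hasCompactSupport (hc.fderiv_apply ℝ w))
    (by simpa using hg.continuous.integrable_of_hasCompactSupport hc)
    (fun x _ => differentiableAt_const 1) (fun x _ => hg.differentiable one_ne_zero x)
  simpa using hparts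

lemma setIntegral_dirDeriv_space (hK : IsCompact K) (hG : ContDiff ℝ 1 G)
    (h₀ : EqOn G 0 (Kᶜ ×ˢ univ)) (w : E) :
    ∫ q in K ×ˢ Ioo a b, dirDeriv (w, 0) G q ∂μ.prod volume = 0 := by
  have hdG : Continuous (dirDeriv (w, 0) G) :=
    (contDiff_dirDeriv (m := 0) hG (by norm_num) _).continuous
  have hdG₀ := eqOn_dirDeriv_zero_off hK.isClosed h₀ (w, 0)
  have hslice (t : ℝ) : ∫ x in K, dirDeriv (w, 0) G (x, t) ∂μ = 0 := by
    rw [setIntegral_eq_integral_of_forall_compl_eq_zero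
      fun x hx => @hdG₀ (x, t) ⟨hx, mem_univ t⟩]
    simp only [← fderiv_slice_space (hG.differentiable one_ne_zero)]
    exact integral_fderiv_eq_zero (hG.comp (contDiff_prodMk_left t))
      (HasCompactSupport.intro hK fun x hx => h₀ ⟨hx, mem_univ t⟩) w
  rw [setIntegral_slab_symm hK hdG]
  simp [hslice]

lemma setIntegral_dirDeriv_time (hK : IsCompact K) (hG : ContDiff ℝ 1 G) (hab : a ≤ b) :
    ∫ q in K ×ˢ Ioo a b, dirDeriv (0, 1) G q ∂μ.prod volume =
      ∫ x in K, (G (x, b) - G (x, a)) ∂μ := by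
  have hdG : Continuous (dirDeriv ((0 : E), (1 : ℝ)) G) :=
    (contDiff_dirDeriv (m := 0) hG (by norm_num) _).continuous
  rw [setIntegral_prod _ (integrableOn_slab hK hdG)]
  congr with x
  rw [← integral_Ioc_eq_integral_Ioo, ← intervalIntegral.integral_of_le hab]
  exact intervalIntegral.integral_eq_sub_of_hasDerivAt
    (fun t _ => hasDerivAt_slice_time (hG.differentiable one_ne_zero) x t)
    ((hdG.comp (Continuous.prodMk_right x)).intervalIntegrable a b)

variable {κ : Type*}

/-- The frame of `E × ℝ` made of the time direction `none` and the directions `w i` of space. -/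
def spacetimeFrame (w : κ → E) : Option κ → E × ℝ
  | none => (0, 1)
  | some i => (w i, 0)

/-- The Lorentzian signs of the directions in `spacetimeFrame`. -/
def spacetimeSign (κ : Type*) : Option κ → ℝ
  | none => 1
  | some _ => -1

lemma sq_spacetimeSign (i : Option κ) : spacetimeSign κ i ^ 2 = 1 := by
  cases i <;> simp [spacetimeSign]

lemma setIntegral_frameDiv [Fintype κ] {w : κ → E} {F : Option κ → E × ℝ → ℝ} (hK : IsCompact K)
    (hF : ∀ i, ContDiff ℝ 1 (F i)) (h₀ : ∀ i, EqOn (F i) 0 (Kᶜ ×ˢ univ)) (hab : a ≤ b) :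
    ∫ q in K ×ˢ Ioo a b, frameDiv (spacetimeFrame w) (spacetimeSign κ) F q ∂μ.prod volume =
      ∫ x in K, (F none (x, b) - F none (x, a)) ∂μ := by
  have hint (i : Option κ) : IntegrableOn
      (fun q => spacetimeSign κ i * dirDeriv (spacetimeFrame w i) (F i) q) (K ×ˢ Ioo a b)
      (μ.prod volume) :=
    integrableOn_slab hK (continuous_const.mul
      (contDiff_dirDeriv (m := 0) (hF i) (by norm_num) _).continuous)
  unfold frameDiv
  rw [integral_finsetSum _ fun i _ => hint i, Fintype.sum_option]
  simp only [integral_const_mul, spacetimeFrame, spacetimeSign,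
    setIntegral_dirDeriv_time hK (hF none) hab,
    setIntegral_dirDeriv_space hK (hF (some _)) (h₀ (some _))]
  simp

end SpaceTime

section CarlemanEstimate

variable {E : Type*} [NormedAddCommGroup E] [NormedSpace ℝ E] {κ : Type*} [Fintype κ]

/-- `φ` is a weight, with auxiliary function `ρ` and constant `c`, for which the Carleman estimate
on `Ω × (a, b)` holds without any condition at the times `a` and `b`. The operator is
`∂ₜ² - ∑ i, ∂_{w i}²`. -/
structure IsCarlemanWeight (w : κ → E) (Ω : Set E) (a b : ℝ) (φ ρ : E × ℝ → ℝ) (c : ℝ) :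
    Prop where
  const_pos : 0 < c
  contDiff_weight : ContDiff ℝ 3 φ
  contDiff_aux : ContDiff ℝ 1 ρ
  pseudoconvexAt : ∀ x ∈ Ω, ∀ t ∈ Icc a b,
    PseudoconvexAt (spacetimeFrame w) (spacetimeSign κ) φ ρ c (x, t)
  outflowAt_final : ∀ x ∈ Ω, OutflowAt (spacetimeFrame w) (spacetimeSign κ) φ c none 1 (x, b)
  outflowAt_initial : ∀ x ∈ Ω,
    OutflowAt (spacetimeFrame w) (spacetimeSign κ) φ c none (-1) (x, a)

namespace IsCarlemanWeight

variable [MeasurableSpace E] [BorelSpace E] {μ : Measure E} {w : κ → E}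
  {Ω K : Set E} {a b c s N : ℝ} {φ ρ z : E × ℝ → ℝ}

lemma integral_weighted_le_frameDiv [IsFiniteMeasureOnCompacts μ]
    (h : IsCarlemanWeight w Ω a b φ ρ c) (hK : IsCompact K) (hKΩ : K ⊆ Ω)
    (hz : ContDiff ℝ 2 z) (hs : 1 ≤ s) (hNs : N * (1 + c) ≤ c ^ 2 * s)
    (hN : ∀ x ∈ K, ∀ t ∈ Icc a b,
      coeffSize (spacetimeFrame w) (spacetimeSign κ) φ ρ (x, t) ≤ N) :
    s * (∫ q in K ×ˢ Ioo a b,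
          exp (2 * s * φ q) * gradNormSq (spacetimeFrame w) z q ∂μ.prod volume) +
        s ^ 3 * (∫ q in K ×ˢ Ioo a b, exp (2 * s * φ q) * z q ^ 2 ∂μ.prod volume) ≤
      2 * (N + 1) / c * (2 * s * (∫ q in K ×ˢ Ioo a b,
          frameDiv (spacetimeFrame w) (spacetimeSign κ) (carlemanFlux (spacetimeFrame w)
            (spacetimeSign κ) φ ρ s (conjugate φ s z)) q ∂μ.prod volume) +
        ∫ q in K ×ˢ Ioo a b, exp (2 * s * φ q) *
          waveOp (spacetimeFrame w) (spacetimeSign κ) z q ^ 2 ∂μ.prod volume) := by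
  set e := spacetimeFrame w
  set ε := spacetimeSign κ
  set F := carlemanFlux e ε φ ρ s (conjugate φ s z)
  have hexp : Continuous fun q => exp (2 * s * φ q) :=
    (continuous_const.mul h.contDiff_weight.continuous).rexp
  have hint {G : E × ℝ → ℝ} (hG : Continuous G) :
      IntegrableOn (fun q => exp (2 * s * φ q) * G q) (K ×ˢ Ioo a b) (μ.prod volume) :=
    integrableOn_slab hK (hexp.mul hG)
  have hgrad := (hint (continuous_gradNormSq (e := e) (hz.of_le one_le_two))).const_mul s
  have hzero := (hint (G := fun q => z q ^ 2) (hz.continuous.pow 2)).const_mul (s ^ 3)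
  have hwave := hint (G := fun q => waveOp e ε z q ^ 2)
    ((contDiff_waveOp (m := 0) hz (by norm_num)).continuous.pow 2)
  have hdiv : IntegrableOn (fun q => 2 * s * frameDiv e ε F q) (K ×ˢ Ioo a b) (μ.prod volume) :=
    (integrableOn_slab hK (continuous_frameDiv (contDiff_carlemanFlux h.contDiff_weight
      h.contDiff_aux (contDiff_conjugate (h.contDiff_weight.of_le (by norm_num)) hz)))).const_mul _
  simp only [← integral_const_mul]
  rw [← integral_add hgrad hzero, ← integral_add hdiv hwave, ← integral_const_mul]
  exact setIntegral_mono_on (hgrad.fun_add hzero) ((hdiv.fun_add hwave).const_mul _)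
    (hK.measurableSet.prod measurableSet_Ioo) fun q hq =>
      pointwise_carleman_estimate sq_spacetimeSign h.contDiff_weight h.contDiff_aux hz h.const_pos
        (h.pseudoconvexAt q.1 (hKΩ hq.1) q.2 (Ioo_subset_Icc_self hq.2)) hs
        (hN q.1 hq.1 q.2 (Ioo_subset_Icc_self hq.2)) hNs

variable [FiniteDimensional ℝ E] [μ.IsAddHaarMeasure]

lemma setIntegral_frameDiv_carlemanFlux_nonpos (h : IsCarlemanWeight w Ω a b φ ρ c) (hab : a ≤ b)
    (hK : IsCompact K) (hKΩ : K ⊆ Ω) (hz : ContDiff ℝ 2 z) (h₀ : EqOn z 0 (Kᶜ ×ˢ univ))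
    (hσ : ∀ x ∈ K, ∀ t ∈ Icc a b,
      multiplier (spacetimeFrame w) (spacetimeSign κ) φ ρ (x, t) ^ 2 ≤ (c * s) ^ 2) :
    ∫ q in K ×ˢ Ioo a b, frameDiv (spacetimeFrame w) (spacetimeSign κ)
      (carlemanFlux (spacetimeFrame w) (spacetimeSign κ) φ ρ s (conjugate φ s z)) q
        ∂μ.prod volume ≤ 0 := by
  have hv := contDiff_conjugate (s := s)
    (h.contDiff_weight.of_le (by norm_num : (2 : WithTop ℕ∞) ≤ 3)) hz
  have hv₀ : EqOn (conjugate φ s z) 0 (Kᶜ ×ˢ univ) := fun q hq => by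
    simp [conjugate, h₀ hq]
  rw [setIntegral_frameDiv hK (contDiff_carlemanFlux h.contDiff_weight h.contDiff_aux hv)
    (fun i q hq => carlemanFlux_eq_zero (hv₀ hq)
      fun j => eqOn_dirDeriv_zero_off hK.isClosed hv₀ _ hq) hab]
  refine setIntegral_nonpos hK.measurableSet fun x hx => ?_
  have hfinal := mul_carlemanFlux_nonpos (one_pow 2) (h.outflowAt_final x (hKΩ hx))
    (hσ x hx b (right_mem_Icc.2 hab)) h.const_pos.le (conjugate φ s z)
  have hinitial := mul_carlemanFlux_nonpos (by norm_num) (h.outflowAt_initial x (hKΩ hx))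
    (hσ x hx a (left_mem_Icc.2 hab)) h.const_pos.le (conjugate φ s z)
  linarith

lemma integral_estimate (h : IsCarlemanWeight w Ω a b φ ρ c) (hab : a ≤ b)
    (hK : IsCompact K) (hKΩ : K ⊆ Ω) (hz : ContDiff ℝ 2 z) (h₀ : EqOn z 0 (Kᶜ ×ˢ univ))
    (hs : 1 ≤ s) (hN₀ : 0 ≤ N) (hNs : N * (1 + c) ≤ c ^ 2 * s)
    (hN : ∀ x ∈ K, ∀ t ∈ Icc a b,
      coeffSize (spacetimeFrame w) (spacetimeSign κ) φ ρ (x, t) ≤ N) :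
    s * (∫ q in K ×ˢ Ioo a b,
          exp (2 * s * φ q) * gradNormSq (spacetimeFrame w) z q ∂μ.prod volume) +
        s ^ 3 * (∫ q in K ×ˢ Ioo a b, exp (2 * s * φ q) * z q ^ 2 ∂μ.prod volume) ≤
      2 * (N + 1) / c * ∫ q in K ×ˢ Ioo a b, exp (2 * s * φ q) *
        waveOp (spacetimeFrame w) (spacetimeSign κ) z q ^ 2 ∂μ.prod volume := by
  have hc₀ := h.const_pos
  have hs₀ : 0 ≤ s := zero_le_one.trans hs
  have hσ : N ≤ (c * s) ^ 2 := by
    nlinarith only [hNs, mul_nonneg hN₀ hc₀.le,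
      mul_nonneg (mul_nonneg (sq_nonneg c) hs₀) (sub_nonneg.2 hs)]
  have hflux := h.setIntegral_frameDiv_carlemanFlux_nonpos (μ := μ) hab hK hKΩ hz h₀
    fun x hx t ht => sq_multiplier_le_coeffSize.trans ((hN x hx t ht).trans hσ)
  refine (h.integral_weighted_le_frameDiv hK hKΩ hz hs hNs hN).trans ?_
  gcongr
  linarith [mul_nonpos_of_nonneg_of_nonpos (by positivity : 0 ≤ 2 * s) hflux]

theorem exists_estimate (h : IsCarlemanWeight w Ω a b φ ρ c) (hΩ : Bornology.IsBounded Ω)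
    (hab : a ≤ b) :
    ∃ s₀ > 0, ∃ M > 0, ∀ s ≥ s₀, ∀ (z : E × ℝ → ℝ) (K : Set E), ContDiff ℝ 2 z → IsCompact K →
      K ⊆ Ω → EqOn z 0 (Kᶜ ×ˢ univ) →
      s * (∫ q in K ×ˢ Ioo a b,
            exp (2 * s * φ q) * gradNormSq (spacetimeFrame w) z q ∂μ.prod volume) +
          s ^ 3 * (∫ q in K ×ˢ Ioo a b, exp (2 * s * φ q) * z q ^ 2 ∂μ.prod volume) ≤
        M * ∫ q in K ×ˢ Ioo a b, exp (2 * s * φ q) *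
          waveOp (spacetimeFrame w) (spacetimeSign κ) z q ^ 2 ∂μ.prod volume := by
  have hc₀ := h.const_pos
  have hbdd := (hΩ.isCompact_closure.prod (isCompact_Icc (a := a) (b := b))).bddAbove_image
    (continuous_coeffSize (e := spacetimeFrame w) (ε := spacetimeSign κ) h.contDiff_weight
      h.contDiff_aux).continuousOn
  obtain ⟨N, hN₀, hN⟩ := hbdd.exists_ge 0
  refine ⟨max 1 (N * (1 + c) / c ^ 2), by positivity, 2 * (N + 1) / c, by positivity,
    fun s hs z K hz hK hKΩ h₀ => ?_⟩
  refine h.integral_estimate hab hK hKΩ hz h₀ ((le_max_left _ _).trans hs) hN₀ ?_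
    fun x hx t ht => hN _ (mem_image_of_mem _ ⟨subset_closure (hKΩ hx), ht⟩)
  rw [← div_le_iff₀' (by positivity)]
  exact (le_max_right _ _).trans hs

end IsCarlemanWeight

end CarlemanEstimate

section QuadraticWeight

variable {E : Type*} [NormedAddCommGroup E] [NormedSpace ℝ E] {κ : Type*} [Fintype κ] {w : κ → E}

lemma gradNormSq_spacetimeFrame (f : E × ℝ → ℝ) (q : E × ℝ) :
    gradNormSq (spacetimeFrame w) f q =
      dirDeriv (0, 1) f q ^ 2 + gradNormSq (fun i => (w i, (0 : ℝ))) f q := by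
  simp [gradNormSq, Fintype.sum_option, spacetimeFrame]

lemma gradForm_spacetimeFrame (f g : E × ℝ → ℝ) (q : E × ℝ) :
    gradForm (spacetimeFrame w) (spacetimeSign κ) f g q =
      dirDeriv (0, 1) f q * dirDeriv (0, 1) g q -
        gradForm (fun i => (w i, (0 : ℝ))) 1 f g q := by
  simp [gradForm, Fintype.sum_option, spacetimeFrame, spacetimeSign, sub_eq_add_neg]

lemma gradForm_spacetimeFrame_self (f : E × ℝ → ℝ) (q : E × ℝ) :
    gradForm (spacetimeFrame w) (spacetimeSign κ) f f q =
      dirDeriv (0, 1) f q ^ 2 - gradNormSq (fun i => (w i, (0 : ℝ))) f q := by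
  rw [gradForm_spacetimeFrame]
  simp [gradForm, gradNormSq, pow_two]

variable {n : ℕ} {x₀ : EuclideanSpace ℝ (Fin n)} {β C₀ : ℝ}

lemma contDiff_psi {k : WithTop ℕ∞} : ContDiff ℝ k (Function.uncurry (psi x₀ β C₀)) :=
  (((contDiff_fst.sub contDiff_const).norm_sq ℝ).sub
    (contDiff_const.mul (contDiff_snd.pow 2))).add contDiff_const

lemma dirDeriv_psi (w q : EuclideanSpace ℝ (Fin n) × ℝ) :
    dirDeriv w (Function.uncurry (psi x₀ β C₀)) q =
      2 * ⟪q.1 - x₀, w.1⟫ - 2 * β * q.2 * w.2 := by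
  have hspace : HasFDerivAt (fun p : EuclideanSpace ℝ (Fin n) × ℝ => p.1 - x₀)
      (ContinuousLinearMap.fst ℝ _ ℝ) q := hasFDerivAt_fst.sub_const x₀
  have htime : HasFDerivAt (fun p : EuclideanSpace ℝ (Fin n) × ℝ => p.2)
      (ContinuousLinearMap.snd ℝ _ ℝ) q := hasFDerivAt_snd
  have hpsi : HasFDerivAt (Function.uncurry (psi x₀ β C₀)) _ q :=
    (hspace.norm_sq.sub ((htime.pow 2).const_mul β)).add_const C₀
  rw [dirDeriv, hpsi.fderiv]
  simp only [sub_apply, smul_apply, ContinuousLinearMap.comp_apply, ContinuousLinearMap.coe_fst',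
    ContinuousLinearMap.coe_snd', coe_innerSL_apply, smul_eq_mul, nsmul_eq_mul, Nat.cast_ofNat]
  ring

lemma dirDeriv_dirDeriv_psi (u w q : EuclideanSpace ℝ (Fin n) × ℝ) :
    dirDeriv u (dirDeriv w (Function.uncurry (psi x₀ β C₀))) q =
      2 * ⟪u.1, w.1⟫ - 2 * β * u.2 * w.2 := by
  have hspace : HasFDerivAt (fun p : EuclideanSpace ℝ (Fin n) × ℝ => p.1 - x₀)
      (ContinuousLinearMap.fst ℝ _ ℝ) q := hasFDerivAt_fst.sub_const x₀
  have htime : HasFDerivAt (fun p : EuclideanSpace ℝ (Fin n) × ℝ => p.2)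
      (ContinuousLinearMap.snd ℝ _ ℝ) q := hasFDerivAt_snd
  have hderiv : HasFDerivAt (fun p : EuclideanSpace ℝ (Fin n) × ℝ =>
      2 * ⟪p.1 - x₀, w.1⟫ - 2 * β * p.2 * w.2) _ q :=
    ((hspace.inner ℝ (hasFDerivAt_const w.1 q)).const_mul 2).sub
      ((htime.const_mul (2 * β)).mul_const w.2)
  rw [funext (dirDeriv_psi w), dirDeriv, hderiv.fderiv]
  simp only [sub_apply, smul_apply, ContinuousLinearMap.comp_apply, ContinuousLinearMap.prod_apply,
    ContinuousLinearMap.coe_fst', ContinuousLinearMap.coe_snd', zero_apply, fderivInnerCLM_apply,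
    inner_zero_right, zero_add, smul_eq_mul]
  ring

variable (b : OrthonormalBasis κ ℝ (EuclideanSpace ℝ (Fin n)))

lemma gradNormSq_space_psi (q : EuclideanSpace ℝ (Fin n) × ℝ) :
    gradNormSq (fun i => (b i, (0 : ℝ))) (Function.uncurry (psi x₀ β C₀)) q =
      4 * ‖q.1 - x₀‖ ^ 2 := by
  simp only [gradNormSq, dirDeriv_psi, mul_zero, sub_zero, mul_pow, ← Finset.mul_sum,
    b.sum_sq_inner_left]
  norm_num

lemma hessForm_psi_self (f : EuclideanSpace ℝ (Fin n) × ℝ → ℝ)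
    (q : EuclideanSpace ℝ (Fin n) × ℝ) :
    hessForm (spacetimeFrame b) (spacetimeSign κ) (Function.uncurry (psi x₀ β C₀)) f f q =
      2 * gradNormSq (fun i => (b i, (0 : ℝ))) f q - 2 * β * dirDeriv (0, 1) f q ^ 2 := by
  classical
  simp only [hessForm, gradNormSq, dirDeriv_dirDeriv_psi, Fintype.sum_option, spacetimeFrame,
    spacetimeSign, b.inner_eq_ite, inner_zero_left, inner_zero_right, mul_zero, zero_mul, sub_zero,
    Finset.sum_const_zero, mul_ite, ite_mul, Finset.sum_ite_eq, Finset.mem_univ, if_true,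
    Finset.mul_sum, pow_two]
  ring_nf

lemma phi_eq_exp_psi (l : ℝ) : Function.uncurry (phi x₀ β C₀ l) =
    fun q => exp (l * Function.uncurry (psi x₀ β C₀) q) :=
  rfl

lemma gradForm_psi_self (q : EuclideanSpace ℝ (Fin n) × ℝ) :
    gradForm (spacetimeFrame b) (spacetimeSign κ) (Function.uncurry (psi x₀ β C₀))
      (Function.uncurry (psi x₀ β C₀)) q = 4 * β ^ 2 * q.2 ^ 2 - 4 * ‖q.1 - x₀‖ ^ 2 := by
  rw [gradForm_spacetimeFrame_self, gradNormSq_space_psi, dirDeriv_psi]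
  simp only [inner_zero_right]
  ring

lemma dirDeriv_phi (l : ℝ) (w q : EuclideanSpace ℝ (Fin n) × ℝ) :
    dirDeriv w (Function.uncurry (phi x₀ β C₀ l)) q =
      l * phi x₀ β C₀ l q.1 q.2 * dirDeriv w (Function.uncurry (psi x₀ β C₀)) q :=
  dirDeriv_exp_const_mul (contDiff_psi.differentiable one_ne_zero q) l w

lemma gradForm_phi (l : ℝ) (f : EuclideanSpace ℝ (Fin n) × ℝ → ℝ)
    (q : EuclideanSpace ℝ (Fin n) × ℝ) :
    gradForm (spacetimeFrame b) (spacetimeSign κ) (Function.uncurry (phi x₀ β C₀ l)) f q =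
      l * phi x₀ β C₀ l q.1 q.2 * gradForm (spacetimeFrame b) (spacetimeSign κ)
        (Function.uncurry (psi x₀ β C₀)) f q :=
  gradForm_exp_const_mul_left (contDiff_psi.differentiable one_ne_zero q) l f

lemma gradForm_phi_self (l : ℝ) (q : EuclideanSpace ℝ (Fin n) × ℝ) :
    gradForm (spacetimeFrame b) (spacetimeSign κ) (Function.uncurry (phi x₀ β C₀ l))
        (Function.uncurry (phi x₀ β C₀ l)) q =
      (l * phi x₀ β C₀ l q.1 q.2) ^ 2 * (4 * β ^ 2 * q.2 ^ 2 - 4 * ‖q.1 - x₀‖ ^ 2) := by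
  rw [gradForm_phi, gradForm_comm, gradForm_phi, gradForm_psi_self]
  ring

lemma hessForm_phi_self (l : ℝ) (f : EuclideanSpace ℝ (Fin n) × ℝ → ℝ)
    (q : EuclideanSpace ℝ (Fin n) × ℝ) :
    hessForm (spacetimeFrame b) (spacetimeSign κ) (Function.uncurry (phi x₀ β C₀ l)) f f q =
      l * phi x₀ β C₀ l q.1 q.2 *
        (2 * gradNormSq (fun i => (b i, (0 : ℝ))) f q - 2 * β * dirDeriv (0, 1) f q ^ 2 +
          l * gradForm (spacetimeFrame b) (spacetimeSign κ)
            (Function.uncurry (psi x₀ β C₀)) f q ^ 2) := by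
  rw [phi_eq_exp_psi, hessForm_exp_const_mul contDiff_psi, hessForm_psi_self, ← pow_two]
  rfl

lemma hessForm_phi_phi (l : ℝ) (q : EuclideanSpace ℝ (Fin n) × ℝ) :
    hessForm (spacetimeFrame b) (spacetimeSign κ) (Function.uncurry (phi x₀ β C₀ l))
        (Function.uncurry (phi x₀ β C₀ l)) (Function.uncurry (phi x₀ β C₀ l)) q =
      (l * phi x₀ β C₀ l q.1 q.2) ^ 3 * (8 * ‖q.1 - x₀‖ ^ 2 - 8 * β ^ 3 * q.2 ^ 2 +
        l * (4 * β ^ 2 * q.2 ^ 2 - 4 * ‖q.1 - x₀‖ ^ 2) ^ 2) := by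
  have hspace : gradNormSq (fun i => (b i, (0 : ℝ))) (Function.uncurry (phi x₀ β C₀ l)) q =
      (l * phi x₀ β C₀ l q.1 q.2) ^ 2 * (4 * ‖q.1 - x₀‖ ^ 2) := by
    rw [← gradNormSq_space_psi (β := β) (C₀ := C₀) b]
    simp only [gradNormSq, dirDeriv_phi, mul_pow, Finset.mul_sum]
  rw [hessForm_phi_self, hspace, gradForm_comm, gradForm_phi, gradForm_psi_self, dirDeriv_phi,
    dirDeriv_psi, inner_zero_right]
  ring

-- With `A = |∇ψ|²` in space and `D = A - (∂ₜψ)²`, the zeroth order term is the cube of `lφ` times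
-- `4(1 - β)A + (2 + 6β)D + 2lD²`, and `l` is so large that the square absorbs a negative `D`.
lemma pseudoconvexAt_phi {l r c : ℝ} {q : EuclideanSpace ℝ (Fin n) × ℝ} (hβ : β ∈ Ioo 0 1)
    (hl : 1 ≤ l * ((1 - β) * r ^ 2)) (hr₀ : 0 ≤ r) (hr : r ≤ ‖q.1 - x₀‖)
    (hc₁ : c ≤ 2 * (1 - β) * (l * phi x₀ β C₀ l q.1 q.2))
    (hc₃ : c ≤ 8 * (1 - β) * r ^ 2 * (l * phi x₀ β C₀ l q.1 q.2) ^ 3) :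
    PseudoconvexAt (spacetimeFrame b) (spacetimeSign κ) (Function.uncurry (phi x₀ β C₀ l))
      (fun p => -2 * (1 + β) * (l * phi x₀ β C₀ l p.1 p.2)) c q := by
  have hβ₁ : 0 ≤ 1 - β := sub_nonneg.2 hβ.2.le
  have hl₀ : 0 < l := pos_of_mul_pos_left (one_pos.trans_le hl) (by positivity)
  have hk₀ : 0 ≤ l * phi x₀ β C₀ l q.1 q.2 := mul_nonneg hl₀.le (exp_pos _).le
  refine ⟨fun f => ?_, ?_⟩
  · have hbound := mul_le_mul_of_nonneg_right hc₁ (gradNormSq_nonneg (e := spacetimeFrame b) f q)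
    rw [hessForm_phi_self, gradForm_spacetimeFrame_self]
    rw [gradNormSq_spacetimeFrame] at hbound ⊢
    nlinarith only [hbound, mul_nonneg hk₀ (mul_nonneg hl₀.le (sq_nonneg
      (gradForm (spacetimeFrame b) (spacetimeSign κ) (Function.uncurry (psi x₀ β C₀)) f q)))]
  · rw [hessForm_phi_phi, gradForm_phi_self]
    set k := l * phi x₀ β C₀ l q.1 q.2
    have hA : r ^ 2 ≤ ‖q.1 - x₀‖ ^ 2 := by gcongr
    set D := 4 * ‖q.1 - x₀‖ ^ 2 - 4 * β ^ 2 * q.2 ^ 2 with hD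
    have habsorb : 0 ≤ 8 * ((1 - β) * r ^ 2) + (2 + 6 * β) * D + 2 * l * D ^ 2 := by
      refine nonneg_of_mul_nonneg_right ?_ hl₀
      nlinarith only [hl, mul_nonneg (by linarith [hβ.1] : 0 ≤ 10 + 6 * β) (sq_nonneg (l * D + 2)),
        mul_nonneg (by linarith : 0 ≤ 6 * (1 - β)) (sq_nonneg (l * D - 2))]
    calc c ≤ 8 * (1 - β) * r ^ 2 * k ^ 3 := hc₃
      _ ≤ (16 * (1 - β) * ‖q.1 - x₀‖ ^ 2 + (2 + 6 * β) * D + 2 * l * D ^ 2) * k ^ 3 := by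
        gcongr
        linarith [mul_le_mul_of_nonneg_left hA hβ₁]
      _ = _ := by rw [hD]; ring

lemma abs_gradForm_space_psi_mul_le {d : ℝ} {q : EuclideanSpace ℝ (Fin n) × ℝ}
    (hd : ‖q.1 - x₀‖ ≤ d) (f : EuclideanSpace ℝ (Fin n) × ℝ → ℝ) (y : ℝ) :
    |gradForm (fun i => (b i, (0 : ℝ))) 1 (Function.uncurry (psi x₀ β C₀)) f q * y| ≤
      d * (y ^ 2 + gradNormSq (fun i => (b i, (0 : ℝ))) f q) := by
  have hd₀ : 0 ≤ d := (norm_nonneg _).trans hd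
  have hcs := sq_gradForm_le (e := fun i => (b i, (0 : ℝ))) (ε := 1) (by simp)
    (Function.uncurry (psi x₀ β C₀)) f q
  rw [gradNormSq_space_psi] at hcs
  set S := gradNormSq (fun i => (b i, (0 : ℝ))) f q
  have hS₀ : 0 ≤ S := gradNormSq_nonneg f q
  refine abs_le_of_sq_le_sq ?_ (by positivity)
  calc _ ≤ 4 * d ^ 2 * S * y ^ 2 := by
        rw [mul_pow]
        gcongr
        exact hcs.trans (by gcongr)
    _ ≤ (d * (y ^ 2 + S)) ^ 2 := by nlinarith only [sq_nonneg (d * (y ^ 2 - S))]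

lemma outflowAt_phi {l d T c θ : ℝ} {q : EuclideanSpace ℝ (Fin n) × ℝ} (hl : 0 ≤ l)
    (hd : ‖q.1 - x₀‖ ≤ d) (hdT : d ≤ β * T) (hθ : θ ^ 2 = 1) (hq : q.2 = θ * T)
    (hc₁ : c ≤ 2 * (β * T - d) * (l * phi x₀ β C₀ l q.1 q.2))
    (hc₃ : c ≤ 8 * (β * T) * ((β * T) ^ 2 - d ^ 2) * (l * phi x₀ β C₀ l q.1 q.2) ^ 3) :
    OutflowAt (spacetimeFrame b) (spacetimeSign κ) (Function.uncurry (phi x₀ β C₀ l))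
      c none θ q := by
  have hk₀ : 0 ≤ l * phi x₀ β C₀ l q.1 q.2 := mul_nonneg hl (exp_pos _).le
  have hd₂ : ‖q.1 - x₀‖ ^ 2 ≤ d ^ 2 := by gcongr
  have hβT : 0 ≤ β * T := (norm_nonneg _).trans (hd.trans hdT)
  have hnormal : dirDeriv (0, 1) (Function.uncurry (psi x₀ β C₀)) q = -2 * (β * T) * θ := by
    rw [dirDeriv_psi, inner_zero_right, hq]
    ring
  refine ⟨fun f => ?_, ?_⟩ <;> simp only [spacetimeFrame, dirDeriv_phi, hnormal]
  · have hbound := mul_le_mul_of_nonneg_right hc₁ (gradNormSq_nonneg (e := spacetimeFrame b) f q)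
    rw [gradForm_phi, gradForm_spacetimeFrame, gradForm_spacetimeFrame_self, hnormal]
    rw [gradNormSq_spacetimeFrame] at hbound ⊢
    have hcross := (neg_le_abs _).trans (abs_gradForm_space_psi_mul_le (β := β) (C₀ := C₀) b hd f
      (θ * dirDeriv (0, 1) f q))
    rw [mul_pow, hθ, one_mul] at hcross
    linear_combination hbound + 2 * mul_le_mul_of_nonneg_left hcross hk₀ -
      2 * (β * T) * (l * phi x₀ β C₀ l q.1 q.2) *
        (dirDeriv (0, 1) f q ^ 2 + gradNormSq (fun i => (b i, (0 : ℝ))) f q) * hθ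
  · rw [gradForm_phi_self]
    set k := l * phi x₀ β C₀ l q.1 q.2
    have hq₂ : β ^ 2 * q.2 ^ 2 = (β * T) ^ 2 := by rw [hq, mul_pow θ, hθ]; ring
    calc _ = -(8 * (β * T) * ((β * T) ^ 2 - ‖q.1 - x₀‖ ^ 2) * k ^ 3) := by
          linear_combination -8 * k ^ 3 * (β * T) * θ ^ 2 * hq₂ -
            8 * k ^ 3 * (β * T) * ((β * T) ^ 2 - ‖q.1 - x₀‖ ^ 2) * hθ
      _ ≤ -(8 * (β * T) * ((β * T) ^ 2 - d ^ 2) * k ^ 3) := by gcongr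
      _ ≤ -c := neg_le_neg hc₃

lemma contDiff_phi {l : ℝ} {k : WithTop ℕ∞} :
    ContDiff ℝ k (Function.uncurry (phi x₀ β C₀ l)) :=
  (contDiff_const.mul contDiff_psi).exp

lemma exp_le_phi {l T t : ℝ} (hl : 0 ≤ l) (hβ : 0 ≤ β) (ht : t ∈ Icc (-T) T)
    (x : EuclideanSpace ℝ (Fin n)) :
    exp (l * (C₀ - β * T ^ 2)) ≤ phi x₀ β C₀ l x t := by
  have hsq : t ^ 2 ≤ T ^ 2 := sq_le_sq' ht.1 ht.2
  unfold phi psi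
  gcongr
  nlinarith only [mul_le_mul_of_nonneg_left hsq hβ, sq_nonneg ‖x - x₀‖]

theorem exists_isCarlemanWeight_phi {Ω : Set (EuclideanSpace ℝ (Fin n))} {l r d T : ℝ}
    (hβ : β ∈ Ioo 0 1) (hr₀ : 0 < r) (hr : ∀ x ∈ Ω, r ≤ ‖x - x₀‖) (hd₀ : 0 ≤ d)
    (hd : ∀ x ∈ Ω, ‖x - x₀‖ ≤ d) (hdT : d < β * T) (hl : 1 ≤ l * ((1 - β) * r ^ 2)) :
    ∃ c, IsCarlemanWeight b Ω (-T) T (Function.uncurry (phi x₀ β C₀ l))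
      (fun q => -2 * (1 + β) * (l * phi x₀ β C₀ l q.1 q.2)) c := by
  have hβ₁ : 0 < 1 - β := sub_pos.2 hβ.2
  have hl₀ : 0 < l := pos_of_mul_pos_left (one_pos.trans_le hl) (by positivity)
  have hβT : 0 < β * T := hd₀.trans_lt hdT
  have hT : -T ≤ T := neg_le_self (pos_of_mul_pos_right hβT hβ.1.le).le
  have := sub_pos.2 hdT
  have hdT₂ : 0 < (β * T) ^ 2 - d ^ 2 := sub_pos.2 (by gcongr)
  set k := l * exp (l * (C₀ - β * T ^ 2))
  have hkφ (x : EuclideanSpace ℝ (Fin n)) {t : ℝ} (ht : t ∈ Icc (-T) T) :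
      k ≤ l * phi x₀ β C₀ l x t :=
    mul_le_mul_of_nonneg_left (exp_le_phi hl₀.le hβ.1.le ht x) hl₀.le
  obtain ⟨c, hc₀, hc₁, hc₂, hc₃, hc₄⟩ : ∃ c > 0, c ≤ 2 * (1 - β) * k ∧
      c ≤ 8 * (1 - β) * r ^ 2 * k ^ 3 ∧ c ≤ 2 * (β * T - d) * k ∧
      c ≤ 8 * (β * T) * ((β * T) ^ 2 - d ^ 2) * k ^ 3 :=
    ⟨min (min _ _) (min _ _), by positivity, (min_le_left _ _).trans (min_le_left _ _),
      (min_le_left _ _).trans (min_le_right _ _), (min_le_right _ _).trans (min_le_left _ _),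
      (min_le_right _ _).trans (min_le_right _ _)⟩
  have houtflow {x : EuclideanSpace ℝ (Fin n)} {t θ : ℝ} (hx : x ∈ Ω) (ht : t ∈ Icc (-T) T)
      (hθ : θ ^ 2 = 1) (hθT : t = θ * T) :
      OutflowAt (spacetimeFrame b) (spacetimeSign κ) (Function.uncurry (phi x₀ β C₀ l)) c none θ
        (x, t) :=
    outflowAt_phi b hl₀.le (hd x hx) hdT.le hθ hθT
      (hc₃.trans (by gcongr; exact hkφ x ht)) (hc₄.trans (by gcongr; exact hkφ x ht))
  exact ⟨c, hc₀, contDiff_phi, contDiff_const.mul (contDiff_const.mul contDiff_phi),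
    fun x hx t ht => pseudoconvexAt_phi b hβ hl hr₀.le (hr x hx)
      (hc₁.trans (by gcongr; exact hkφ x ht)) (hc₂.trans (by gcongr; exact hkφ x ht)),
    fun x hx => houtflow hx (right_mem_Icc.2 hT) (one_pow 2) (one_mul T).symm,
    fun x hx => houtflow hx (left_mem_Icc.2 hT) (by norm_num) (neg_one_mul T).symm⟩

end QuadraticWeight

section EuclideanNotions

variable {n : ℕ} {z : EuclideanSpace ℝ (Fin n) → ℝ → ℝ}

lemma deriv_eq_dirDeriv (hz : Differentiable ℝ (Function.uncurry z))
    (x : EuclideanSpace ℝ (Fin n)) :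
    deriv (z x) = fun t => dirDeriv (0, 1) (Function.uncurry z) (x, t) :=
  funext fun t => (hasDerivAt_slice_time hz x t).deriv

lemma sq_deriv_add_sq_norm_gradient (hz : Differentiable ℝ (Function.uncurry z))
    (x : EuclideanSpace ℝ (Fin n)) (t : ℝ) :
    deriv (z x) t ^ 2 + ‖gradient (fun y => z y t) x‖ ^ 2 =
      gradNormSq (spacetimeFrame (EuclideanSpace.basisFun (Fin n) ℝ)) (Function.uncurry z)
        (x, t) := by
  rw [gradNormSq_spacetimeFrame, deriv_eq_dirDeriv hz,
    ← (EuclideanSpace.basisFun (Fin n) ℝ).sum_sq_inner_left]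
  congr 1
  refine Finset.sum_congr rfl fun i _ => ?_
  rw [← fderiv_slice_space hz]
  congr 1
  exact InnerProductSpace.toDual_symm_apply

lemma deriv_deriv_sub_lap (hz : ContDiff ℝ 2 (Function.uncurry z))
    (x : EuclideanSpace ℝ (Fin n)) (t : ℝ) :
    deriv (deriv (z x)) t - lap (fun y => z y t) x =
      waveOp (spacetimeFrame (EuclideanSpace.basisFun (Fin n) ℝ)) (spacetimeSign (Fin n))
        (Function.uncurry z) (x, t) := by
  have hdz := hz.differentiable two_ne_zero
  have hspace (w : EuclideanSpace ℝ (Fin n)) :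
      (fun y => fderiv ℝ (fun y => z y t) y w) =
        fun y => dirDeriv (w, 0) (Function.uncurry z) (y, t) :=
    funext fun y => fderiv_slice_space hdz w y t
  rw [deriv_eq_dirDeriv hdz, (hasDerivAt_slice_time (differentiable_dirDeriv hz _) x t).deriv]
  simp [lap, waveOp, Fintype.sum_option, spacetimeFrame, spacetimeSign, hspace,
    fderiv_slice_space (differentiable_dirDeriv hz _), sub_eq_add_neg]

theorem IsCarlemanWeight.exists_iterated_estimate {Ω : Set (EuclideanSpace ℝ (Fin n))}
    {a b c : ℝ} {φ : EuclideanSpace ℝ (Fin n) → ℝ → ℝ} {ρ : EuclideanSpace ℝ (Fin n) × ℝ → ℝ}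
    (h : IsCarlemanWeight (EuclideanSpace.basisFun (Fin n) ℝ) Ω a b (Function.uncurry φ) ρ c)
    (hΩ : Bornology.IsBounded Ω) (hab : a ≤ b) :
    ∃ s₀ > 0, ∃ M > 0, ∀ s ≥ s₀, ∀ z : EuclideanSpace ℝ (Fin n) → ℝ → ℝ,
      ContDiff ℝ 2 (Function.uncurry z) →
      (∃ K : Set (EuclideanSpace ℝ (Fin n)), IsCompact K ∧ K ⊆ Ω ∧ ∀ x ∉ K, ∀ t, z x t = 0) →
      s * (∫ t in Ioo a b, ∫ x in Ω, exp (2 * s * φ x t) *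
            (deriv (z x) t ^ 2 + ‖gradient (fun y => z y t) x‖ ^ 2)) +
          s ^ 3 * (∫ t in Ioo a b, ∫ x in Ω, exp (2 * s * φ x t) * z x t ^ 2) ≤
        M * ∫ t in Ioo a b, ∫ x in Ω, exp (2 * s * φ x t) *
          (deriv (deriv (z x)) t - lap (fun y => z y t) x) ^ 2 := by
  obtain ⟨s₀, hs₀, M, hM, hestimate⟩ := h.exists_estimate (μ := volume) hΩ hab
  refine ⟨s₀, hs₀, M, hM, fun s hs z hz ⟨K, hK, hKΩ, hzK⟩ => ?_⟩
  have h₀ : EqOn (Function.uncurry z) 0 (Kᶜ ×ˢ univ) := fun q hq => hzK q.1 hq.1 q.2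
  have hdz (w) := eqOn_dirDeriv_zero_off hK.isClosed h₀ w
  have hddz (w) := eqOn_dirDeriv_zero_off hK.isClosed (hdz w) w
  have hexp : Continuous fun q => exp (2 * s * Function.uncurry φ q) :=
    (continuous_const.mul h.contDiff_weight.continuous).rexp
  have hslab {G : EuclideanSpace ℝ (Fin n) × ℝ → ℝ} (hG : Continuous G)
      (hG₀ : EqOn G 0 (Kᶜ ×ˢ univ)) :
      ∫ q in K ×ˢ Ioo a b, exp (2 * s * Function.uncurry φ q) * G q ∂volume.prod volume =
        ∫ t in Ioo a b, ∫ x in Ω, exp (2 * s * φ x t) * G (x, t) :=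
    (integral_integral_eq_setIntegral_slab hK hKΩ (hexp.mul hG)
      fun q hq => by simp [hG₀ hq]).symm
  have hbound := hestimate s hs (Function.uncurry z) K hz hK hKΩ h₀
  rw [hslab (continuous_gradNormSq (hz.of_le one_le_two))
      fun q hq => by simp [gradNormSq, hdz _ hq],
    hslab (G := fun q => Function.uncurry z q ^ 2) (hz.continuous.pow 2)
      fun q hq => by simp [h₀ hq],
    hslab (G := fun q => waveOp _ _ _ q ^ 2)
      ((contDiff_waveOp (m := 0) hz (by norm_num)).continuous.pow 2)
      fun q hq => by simp [waveOp, hddz _ hq]] at hbound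
  simpa only [sq_deriv_add_sq_norm_gradient (hz.differentiable two_ne_zero),
    deriv_deriv_sub_lap hz, Function.uncurry_apply_pair] using hbound

end EuclideanNotions

theorem carleman_large_time_general {n : ℕ} {Ω : Set (EuclideanSpace ℝ (Fin n))}
    (hΩ : Bornology.IsBounded Ω) {T : ℝ} {x₀ : EuclideanSpace ℝ (Fin n)} (hx₀ : x₀ ∉ closure Ω)
    {β : ℝ} (hβ : β ∈ Ioo 0 1) (htime : sSup ((fun x => ‖x - x₀‖) '' Ω) < β * T) (C₀ : ℝ) :
    ∃ l₀ > 0, ∀ l ≥ l₀, ∃ s₀ > 0, ∃ M > 0, ∀ s ≥ s₀, ∀ z : EuclideanSpace ℝ (Fin n) → ℝ → ℝ,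
      ContDiff ℝ 2 (fun q : EuclideanSpace ℝ (Fin n) × ℝ => z q.1 q.2) →
      (∃ K : Set (EuclideanSpace ℝ (Fin n)), IsCompact K ∧ K ⊆ Ω ∧ ∀ x ∉ K, ∀ t, z x t = 0) →
      s * (∫ t in Ioo (-T) T, ∫ x in Ω, exp (2 * s * phi x₀ β C₀ l x t) *
            (deriv (z x) t ^ 2 + ‖gradient (fun y => z y t) x‖ ^ 2)) +
          s ^ 3 * (∫ t in Ioo (-T) T, ∫ x in Ω, exp (2 * s * phi x₀ β C₀ l x t) * z x t ^ 2) ≤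
        M * ∫ t in Ioo (-T) T, ∫ x in Ω, exp (2 * s * phi x₀ β C₀ l x t) *
          (deriv (deriv (z x)) t - lap (fun y => z y t) x) ^ 2 := by
  obtain ⟨r, hr₀, hball⟩ := Metric.isOpen_iff.1 isClosed_closure.isOpen_compl x₀ hx₀
  have hr (x) (hx : x ∈ Ω) : r ≤ ‖x - x₀‖ := by
    by_contra! hlt
    exact hball (mem_ball_iff_norm.2 hlt) (subset_closure hx)
  have hbdd : BddAbove ((fun x => ‖x - x₀‖) '' Ω) :=
    (hΩ.isCompact_closure.bddAbove_image (by fun_prop)).mono (image_mono subset_closure)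
  have hd (x) (hx : x ∈ Ω) : ‖x - x₀‖ ≤ sSup ((fun x => ‖x - x₀‖) '' Ω) :=
    le_csSup hbdd (mem_image_of_mem _ hx)
  have hd₀ : 0 ≤ sSup ((fun x => ‖x - x₀‖) '' Ω) :=
    Real.sSup_nonneg (forall_mem_image.2 fun _ _ => norm_nonneg _)
  have hT : -T ≤ T := neg_le_self (pos_of_mul_pos_right (hd₀.trans_lt htime) hβ.1.le).le
  have hβr : 0 < (1 - β) * r ^ 2 := mul_pos (sub_pos.2 hβ.2) (by positivity)
  refine ⟨1 / ((1 - β) * r ^ 2), by positivity, fun l hl => ?_⟩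
  obtain ⟨c, hc⟩ := exists_isCarlemanWeight_phi (C₀ := C₀) (EuclideanSpace.basisFun (Fin n) ℝ) hβ
    hr₀ hr hd₀ hd htime ((div_le_iff₀ hβr).1 hl)
  exact hc.exists_iterated_estimate hΩ hT

/-- **Carleman estimate in large time (Theorem 2.5)** specialized to functions supported, in the
space variable, in a compact subset of `Ω` (no vanishing required at `t = ±T`):
`s∫∫ e^{2sφ}(|∂ₜz|² + |∇z|²) + s³∫∫ e^{2sφ}z² ≤ M∫∫ e^{2sφ}|∂ₜ²z - Δz|²`. -/
theorem carleman_large_time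
    (n : ℕ) (hn : 1 ≤ n)
    (Ω : Set (EuclideanSpace ℝ (Fin n))) (hΩo : IsOpen Ω) (hΩb : Bornology.IsBounded Ω)
    (T : ℝ) (hT : 0 < T)
    (x₀ : EuclideanSpace ℝ (Fin n)) (hx₀ : x₀ ∉ closure Ω)
    (β : ℝ) (hβ : β ∈ Set.Ioo (0:ℝ) 1)
    (htime : sSup ((fun x => ‖x - x₀‖) '' Ω) < β * T)
    (C₀ : ℝ) (hC₀ : 0 < C₀)
    (hψ : ∀ x ∈ Ω, ∀ t ∈ Set.Ioo (-T) T, 1 ≤ psi x₀ β C₀ x t) :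
    ∃ l > (0:ℝ), ∃ s₀ > (0:ℝ), ∃ M > (0:ℝ), ∀ s ≥ s₀,
      ∀ z : EuclideanSpace ℝ (Fin n) → ℝ → ℝ,
        ContDiff ℝ (⊤ : ℕ∞) (fun q : EuclideanSpace ℝ (Fin n) × ℝ => z q.1 q.2) →
        (∃ K : Set (EuclideanSpace ℝ (Fin n)), IsCompact K ∧ K ⊆ Ω ∧
          ∀ x ∉ K, ∀ t : ℝ, z x t = 0) →
        s * (∫ t in Set.Ioo (-T) T, ∫ x in Ω, Real.exp (2 * s * phi x₀ β C₀ l x t) *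
              ((deriv (z x) t) ^ 2 + ‖gradient (fun y => z y t) x‖ ^ 2))
          + s ^ 3 * (∫ t in Set.Ioo (-T) T, ∫ x in Ω,
              Real.exp (2 * s * phi x₀ β C₀ l x t) * (z x t) ^ 2)
        ≤ M * ∫ t in Set.Ioo (-T) T, ∫ x in Ω, Real.exp (2 * s * phi x₀ β C₀ l x t) *
            (deriv (deriv (z x)) t - lap (fun y => z y t) x) ^ 2 := by
  obtain ⟨l₀, hl₀, hestimate⟩ := carleman_large_time_general hΩb hx₀ hβ htime C₀
  obtain ⟨s₀, hs₀, M, hM, hbound⟩ := hestimate l₀ le_rfl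
  exact ⟨l₀, hl₀, s₀, hs₀, M, hM, fun s hs z hz => hbound s hs z (contDiff_infty.1 hz 2)⟩
end
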